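/- Let G and H be simple graphs each of whose connected components is a path or a complete graph. Then q(G ∨ H) = 2 if and only if G and H have a pair of compatible multiplicity matrices. -/

import Mathlib

open Matrix Filter

/-- `A ∈ S(G)`: real symmetric matrix whose off-diagonal zero pattern is given by `G`. -/
def inS {V : Type*} (G : SimpleGraph V) (A : Matrix V V ℝ) : Prop :=
  A.IsSymm ∧ ∀ i j : V, i ≠ j → (A i j ≠ 0 ↔ G.Adj i j)

/-- The spectrum of a matrix, as the multiset of roots of its characteristic polynomial. -/
noncomputable def specMultiset {V : Type*} [Fintype V] [DecidableEq V]
    (A : Matrix V V ℝ) : Multiset ℝ :=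
  A.charpoly.roots

/-- The number of distinct eigenvalues of a matrix. -/
noncomputable def qMat {V : Type*} [Fintype V] [DecidableEq V] (A : Matrix V V ℝ) : ℕ :=
  (specMultiset A).toFinset.card

/-- `q(G)`: the minimum number of distinct eigenvalues over matrices in `S(G)`. -/
noncomputable def qGraph {V : Type*} [Fintype V] [DecidableEq V] (G : SimpleGraph V) : ℕ :=
  sInf {q | ∃ A : Matrix V V ℝ, inS G A ∧ qMat A = q}

/-- The strong spectral property. -/
def HasSSP {V : Type*} [Fintype V] [DecidableEq V] (A : Matrix V V ℝ) : Prop :=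
  ∀ X : Matrix V V ℝ, X.IsSymm → A * X = X * A →
    Matrix.hadamard A X = 0 → Matrix.hadamard (1 : Matrix V V ℝ) X = 0 → X = 0

/-- Generic realisability of a multiset of eigenvalues for a graph. -/
def GenericallyRealisable {V : Type*} [Fintype V] [DecidableEq V]
    (G : SimpleGraph V) (σ : Multiset ℝ) : Prop :=
  ∀ Y : Finset (V → ℝ), (∀ y ∈ Y, y ≠ 0) →
    ∃ (d : V → ℝ) (U : Matrix V V ℝ),
      Multiset.map d Finset.univ.val = σ ∧ Uᵀ * U = 1 ∧
      inS G (U * Matrix.diagonal d * Uᵀ) ∧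
      ∀ y ∈ Y, ∀ i, U.mulVec y i ≠ 0

/-- The partial join `(G₁, X) ∨ G₂`: the disjoint union of `G₁` and `G₂` together with all
edges joining vertices of `X ⊆ V(G₁)` to vertices of `G₂`. -/
def partialJoin {α β : Type*} (G₁ : SimpleGraph α) (X : Set α) (G₂ : SimpleGraph β) :
    SimpleGraph (α ⊕ β) where
  Adj x y :=
    (∃ a b, G₁.Adj a b ∧ x = Sum.inl a ∧ y = Sum.inl b) ∨
    (∃ a b, G₂.Adj a b ∧ x = Sum.inr a ∧ y = Sum.inr b) ∨
    (∃ a ∈ X, ∃ b, x = Sum.inl a ∧ y = Sum.inr b) ∨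
    (∃ a ∈ X, ∃ b, x = Sum.inr b ∧ y = Sum.inl a)
  symm := by
    constructor
    rintro x y (⟨a, b, hab, rfl, rfl⟩ | ⟨a, b, hab, rfl, rfl⟩ | ⟨a, ha, b, rfl, rfl⟩ |
      ⟨a, ha, b, rfl, rfl⟩)
    · exact Or.inl ⟨b, a, hab.symm, rfl, rfl⟩
    · exact Or.inr (Or.inl ⟨b, a, hab.symm, rfl, rfl⟩)
    · exact Or.inr (Or.inr (Or.inr ⟨a, ha, b, rfl, rfl⟩))
    · exact Or.inr (Or.inr (Or.inl ⟨a, ha, b, rfl, rfl⟩))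
  loopless := by
    constructor
    rintro x (⟨a, b, hab, rfl, h⟩ | ⟨a, b, hab, rfl, h⟩ | ⟨a, ha, b, rfl, h⟩ | ⟨a, ha, b, rfl, h⟩)
    · cases h; exact hab.ne rfl
    · cases h; exact hab.ne rfl
    · exact (Sum.inl_ne_inr h).elim
    · exact (Sum.inr_ne_inl h).elim

/-- The join `G₁ ∨ G₂` of two graphs. -/
def graphJoin {α β : Type*} (G₁ : SimpleGraph α) (G₂ : SimpleGraph β) : SimpleGraph (α ⊕ β) :=
  partialJoin G₁ Set.univ G₂

/-- The disjoint union of a family of graphs. -/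
def sigmaGraph {ι : Type*} {α : ι → Type*} (G : ∀ i, SimpleGraph (α i)) :
    SimpleGraph (Σ i, α i) where
  Adj x y := ∃ (i : ι) (a b : α i), (G i).Adj a b ∧ x = ⟨i, a⟩ ∧ y = ⟨i, b⟩
  symm := by
    constructor
    rintro x y ⟨i, a, b, hab, rfl, rfl⟩
    exact ⟨i, b, a, hab.symm, rfl, rfl⟩
  loopless := by
    constructor
    rintro x ⟨i, a, b, hab, rfl, h⟩
    obtain rfl : a = b := by simpa using h
    exact hab.ne rfl

/-- The interior rows of an `r`-row matrix: all rows except the first and the last. -/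
def interiorRows (r : ℕ) : Finset (Fin r) :=
  Finset.univ.filter (fun j => j.val ≠ 0 ∧ j.val ≠ r - 1)

/-- Compatibility of two nonnegative integer matrices `V ∈ ℕ₀^{r×k}`, `W ∈ ℕ₀^{r×l}`
(for `r ≥ 3`): the interior row sums agree, and `ṼᵀW̃` is nowhere-zero. -/
def Compatible {r k l : ℕ} (V : Fin r → Fin k → ℕ) (W : Fin r → Fin l → ℕ) : Prop :=
  (∀ j ∈ interiorRows r, (∑ i, V j i) = ∑ i, W j i) ∧
  (∀ a : Fin k, ∀ b : Fin l, (∑ j ∈ interiorRows r, V j a * W j b) ≠ 0)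

/-- `col : Fin r → ℕ` is an ordered multiplicity list realised by a matrix in `S(G)`:
there are `λ₁ < … < λ_r` and `A ∈ S(G)` whose spectrum consists of each `λ_j` with
multiplicity `col j`. -/
def IsOrderedMultiplicityList {α : Type*} [Fintype α] [DecidableEq α]
    (G : SimpleGraph α) {r : ℕ} (col : Fin r → ℕ) : Prop :=
  ∃ lam : Fin r → ℝ, StrictMono lam ∧ ∃ A : Matrix α α ℝ, inS G A ∧
    specMultiset A =
      (Finset.univ.val : Multiset (Fin r)).bind (fun j => Multiset.replicate (col j) (lam j))

/-!
The value `2` is attained by `q(G ∨ H)` exactly when `S(G ∨ H)` contains an involution: a matrix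
whose diagonal blocks have the patterns of `G` and `H` and whose off-diagonal block is nowhere
zero. Diagonalising the diagonal blocks, component by component, turns such an involution into
`[diag f, M; Mᵀ, -diag g]`, which squares to `1` iff `M Mᵀ = 1 - diag f ^ 2`,
`Mᵀ M = 1 - diag g ^ 2` and `M` vanishes unless `f` and `g` agree. Hence `f` and `g` take values in
`[-1, 1]` and each value in `(-1, 1)` equally often, and `M` can only connect components sharing
such a value: these are the two compatibility conditions.

Conversely, compatible multiplicities allow `M` to be chosen as a scaled nowhere-zero orthogonal
matrix between equal eigenvalues. The matrices `U` diagonalising the components must then make the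
off-diagonal block nowhere zero, so every multiplicity list has to be realisable with `U y` nowhere
zero for finitely many prescribed vectors `y ≠ 0`. For a complete graph a generic Householder
reflection does this. A path has simple spectrum, and the Gram–Schmidt process applied to the Krylov
vectors of a diagonal matrix and a generic vector yields the required `U`.
-/

section GenericPoints

variable {σ R : Type*} [CommRing R]

/-- The property `p` of points holds off the zero locus of some nonzero polynomial. -/
def HoldsGenerically (p : (σ → R) → Prop) : Prop :=
  ∃ P : MvPolynomial σ R, P ≠ 0 ∧ ∀ x, MvPolynomial.eval x P ≠ 0 → p x

namespace HoldsGenerically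

lemma of_eval_eq {F : (σ → R) → R} (P : MvPolynomial σ R)
    (hP : ∀ x, MvPolynomial.eval x P = F x) {x₀ : σ → R} (hx₀ : F x₀ ≠ 0) :
    HoldsGenerically fun x => F x ≠ 0 :=
  ⟨P, fun h => hx₀ (by rw [← hP, h, map_zero]), fun x hx => ne_of_eq_of_ne (hP x).symm hx⟩

variable [IsDomain R]

lemma and {p q : (σ → R) → Prop} (hp : HoldsGenerically p) (hq : HoldsGenerically q) :
    HoldsGenerically fun x => p x ∧ q x := by
  obtain ⟨P, hP, hp⟩ := hp
  obtain ⟨Q, hQ, hq⟩ := hq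
  refine ⟨P * Q, mul_ne_zero hP hQ, fun x hx => ?_⟩
  rw [map_mul] at hx
  exact ⟨hp x (left_ne_zero_of_mul hx), hq x (right_ne_zero_of_mul hx)⟩

lemma all {ι : Type*} [Finite ι] {p : ι → (σ → R) → Prop} (h : ∀ i, HoldsGenerically (p i)) :
    HoldsGenerically fun x => ∀ i, p i x := by
  have := Fintype.ofFinite ι
  choose P hP hp using h
  refine ⟨∏ i, P i, Finset.prod_ne_zero_iff.2 fun i _ => hP i, fun x hx i => hp i x ?_⟩
  rw [map_prod] at hx
  exact Finset.prod_ne_zero_iff.1 hx i (Finset.mem_univ i)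

lemma exists_point [Infinite R] {p : (σ → R) → Prop} (h : HoldsGenerically p) : ∃ x, p x := by
  obtain ⟨P, hP, hp⟩ := h
  obtain ⟨x, hx⟩ : ∃ x, MvPolynomial.eval x P ≠ 0 := by
    contrapose! hP
    exact MvPolynomial.funext fun x => by rw [hP x, map_zero]
  exact ⟨x, hp x hx⟩

end HoldsGenerically

end GenericPoints

section OrthogonalConjugation

variable {V : Type*} [Fintype V] [DecidableEq V]

lemma orthogonal_conj_mul_conj {U : Matrix V V ℝ} (hU : Uᵀ * U = 1) (X Y : Matrix V V ℝ) :
    (U * X * Uᵀ) * (U * Y * Uᵀ) = U * (X * Y) * Uᵀ :=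
  calc (U * X * Uᵀ) * (U * Y * Uᵀ) = U * X * (Uᵀ * U) * Y * Uᵀ := by simp only [mul_assoc]
    _ = U * (X * Y) * Uᵀ := by rw [hU, mul_one, mul_assoc U]

lemma orthogonal_conj_eq_one_iff {U X : Matrix V V ℝ} (hU : Uᵀ * U = 1) :
    U * X * Uᵀ = 1 ↔ X = 1 := by
  have hU' : U * Uᵀ = 1 := mul_eq_one_comm.1 hU
  refine ⟨fun h => ?_, fun h => by rw [h, mul_one, hU']⟩
  calc X = (Uᵀ * U) * X * (Uᵀ * U) := by rw [hU, one_mul, mul_one]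
    _ = Uᵀ * (U * X * Uᵀ) * U := by simp only [mul_assoc]
    _ = 1 := by rw [h, mul_one, hU]

lemma orthogonal_conj_mul_self_eq_one_iff {U X : Matrix V V ℝ} (hU : Uᵀ * U = 1) :
    (U * X * Uᵀ) * (U * X * Uᵀ) = 1 ↔ X * X = 1 := by
  rw [orthogonal_conj_mul_conj hU, orthogonal_conj_eq_one_iff hU]

lemma diagonal_mul_self_eq_one_iff {d : V → ℝ} :
    diagonal d * diagonal d = 1 ↔ ∀ i, d i * d i = 1 := by
  rw [diagonal_mul_diagonal, ← diagonal_one, diagonal_injective.eq_iff, funext_iff]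

lemma isSymm_conj_diagonal (U : Matrix V V ℝ) (d : V → ℝ) : (U * diagonal d * Uᵀ).IsSymm := by
  rw [Matrix.IsSymm, transpose_mul, transpose_mul, transpose_transpose, diagonal_transpose,
    mul_assoc]

lemma exists_orthogonal_conj_diagonal {A : Matrix V V ℝ} (hA : A.IsSymm) :
    ∃ (d : V → ℝ) (U : Matrix V V ℝ), Uᵀ * U = 1 ∧ U * diagonal d * Uᵀ = A := by
  have hH : A.IsHermitian := (conjTranspose_eq_transpose_of_trivial A).trans hA
  refine ⟨hH.eigenvalues, hH.eigenvectorUnitary, ?_, ?_⟩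
  · simpa [star_eq_conjTranspose, conjTranspose_eq_transpose_of_trivial]
      using Unitary.coe_star_mul_self hH.eigenvectorUnitary
  · simpa [Unitary.conjStarAlgAut_apply, star_eq_conjTranspose,
      conjTranspose_eq_transpose_of_trivial, Function.comp_def] using hH.spectral_theorem.symm

lemma specMultiset_conj_diagonal {U : Matrix V V ℝ} (hU : Uᵀ * U = 1) (d : V → ℝ) :
    specMultiset (U * diagonal d * Uᵀ) = Finset.univ.val.map d := by
  rw [specMultiset, charpoly_mul_comm, ← mul_assoc, hU, one_mul, charpoly_diagonal]
  exact Polynomial.roots_multiset_prod_X_sub_C (Finset.univ.val.map d) ▸ by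
    rw [Multiset.map_map]; rfl

lemma qMat_conj_diagonal {U : Matrix V V ℝ} (hU : Uᵀ * U = 1) (d : V → ℝ) :
    qMat (U * diagonal d * Uᵀ) = (Finset.univ.image d).card := by
  rw [qMat, specMultiset_conj_diagonal hU]
  rfl

lemma exists_ne_of_conj_diagonal_apply_ne_zero {U : Matrix V V ℝ} (hU : Uᵀ * U = 1) {d : V → ℝ}
    {i j : V} (hij : i ≠ j) (h : (U * diagonal d * Uᵀ) i j ≠ 0) : ∃ a b, d a ≠ d b := by
  contrapose! h
  have hd : diagonal d = d i • (1 : Matrix V V ℝ) := by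
    rw [smul_one_eq_diagonal, funext fun a => h a i]
  rw [hd, mul_smul_comm, mul_one, smul_mul_assoc, mul_eq_one_comm.1 hU, Matrix.smul_apply,
    one_apply_ne hij, smul_zero]

end OrthogonalConjugation

section TwoDistinctEigenvalues

lemma inS.smul_sub_smul_one {V : Type*} [DecidableEq V] {G : SimpleGraph V}
    {A : Matrix V V ℝ} (hA : inS G A) {c : ℝ} (hc : c ≠ 0) (s : ℝ) :
    inS G (c • A - s • (1 : Matrix V V ℝ)) := by
  refine ⟨(hA.1.smul c).sub (isSymm_one.smul s), fun i j hij => ?_⟩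
  rw [← hA.2 i j hij]
  simp [hij, hc]

variable {V : Type*} [Fintype V] [DecidableEq V] {G : SimpleGraph V}

lemma two_le_qMat {A : Matrix V V ℝ} (hA : inS G A) {i j : V} (hij : G.Adj i j) :
    2 ≤ qMat A := by
  obtain ⟨d, U, hU, rfl⟩ := exists_orthogonal_conj_diagonal hA.1
  obtain ⟨a, b, hab⟩ :=
    exists_ne_of_conj_diagonal_apply_ne_zero hU hij.ne ((hA.2 i j hij.ne).2 hij)
  rw [qMat_conj_diagonal hU]
  exact Finset.one_lt_card.2 ⟨d a, by simp, d b, by simp, hab⟩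

lemma qMat_le_two_of_mul_self_eq_one {A : Matrix V V ℝ} (hA : A.IsSymm) (hAA : A * A = 1) :
    qMat A ≤ 2 := by
  obtain ⟨d, U, hU, rfl⟩ := exists_orthogonal_conj_diagonal hA
  rw [orthogonal_conj_mul_self_eq_one_iff hU, diagonal_mul_self_eq_one_iff] at hAA
  have hsub : Finset.univ.image d ⊆ {1, -1} := by
    intro t ht
    obtain ⟨i, -, rfl⟩ := Finset.mem_image.1 ht
    simpa using mul_self_eq_one_iff.1 (hAA i)
  rw [qMat_conj_diagonal hU]
  exact (Finset.card_le_card hsub).trans Finset.card_le_two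

-- The affine map taking the two eigenvalues to `1` and `-1` turns `A` into an involution.
lemma exists_mul_self_eq_one_of_qMat_eq_two {A : Matrix V V ℝ} (hA : inS G A) (hq : qMat A = 2) :
    ∃ B, inS G B ∧ B * B = 1 := by
  obtain ⟨d, U, hU, rfl⟩ := exists_orthogonal_conj_diagonal hA.1
  rw [qMat_conj_diagonal hU] at hq
  obtain ⟨a, b, hab, himage⟩ := Finset.card_eq_two.1 hq
  have hd : ∀ i, d i = a ∨ d i = b := fun i => by
    simpa [himage] using Finset.mem_image_of_mem d (Finset.mem_univ i)
  have hba : b - a ≠ 0 := sub_ne_zero.2 hab.symm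
  set c := 2 / (b - a) with hc
  set s := (a + b) / (b - a) with hs
  have hconj : c • (U * diagonal d * Uᵀ) - s • (1 : Matrix V V ℝ) =
      U * diagonal (fun i => c * d i - s) * Uᵀ := by
    have hdiag : diagonal (fun i => c * d i - s) = c • diagonal d - s • (1 : Matrix V V ℝ) := by
      rw [smul_one_eq_diagonal, ← diagonal_smul, diagonal_sub]
      rfl
    rw [hdiag, mul_sub, sub_mul, mul_smul_comm, smul_mul_assoc, mul_smul_comm, smul_mul_assoc,
      mul_one, mul_eq_one_comm.1 hU]
  refine ⟨_, hA.smul_sub_smul_one (div_ne_zero two_ne_zero hba) s, ?_⟩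
  rw [← hc, hconj, orthogonal_conj_mul_self_eq_one_iff hU, diagonal_mul_self_eq_one_iff]
  intro i
  rcases hd i with h | h <;> rw [h, hc, hs] <;> field_simp <;> ring

lemma qGraph_eq_two_iff {i j : V} (hij : G.Adj i j) :
    qGraph G = 2 ↔ ∃ A : Matrix V V ℝ, inS G A ∧ A * A = 1 := by
  constructor
  · intro h
    obtain ⟨A, hA, hq⟩ := Nat.sInf_mem (Nat.nonempty_of_sInf_eq_succ h)
    exact exists_mul_self_eq_one_of_qMat_eq_two hA (hq.trans h)
  · rintro ⟨A, hA, hAA⟩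
    have hle := qMat_le_two_of_mul_self_eq_one hA.1 hAA
    refine le_antisymm ((Nat.sInf_le ⟨A, hA, rfl⟩ : qGraph G ≤ qMat A).trans hle)
      (le_csInf ⟨_, A, hA, rfl⟩ ?_)
    rintro _ ⟨B, hB, rfl⟩
    exact two_le_qMat hB hij

end TwoDistinctEigenvalues

section Realisations

variable {V : Type*} [Fintype V] [DecidableEq V] {G : SimpleGraph V} {d : V → ℝ}

/-- `U` is an orthogonal matrix whose columns are eigenvectors, with eigenvalues listed by `d`,
of the matrix `U * diagonal d * Uᵀ ∈ S(G)`. -/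
structure Realises (G : SimpleGraph V) (d : V → ℝ) (U : Matrix V V ℝ) : Prop where
  transpose_mul_self : Uᵀ * U = 1
  inS_conj : inS G (U * diagonal d * Uᵀ)

lemma Realises.mul_transpose_self {U : Matrix V V ℝ} (h : Realises G d U) : U * Uᵀ = 1 :=
  mul_eq_one_comm.1 h.transpose_mul_self

lemma inS.exists_realises {A : Matrix V V ℝ} (hA : inS G A) :
    ∃ d U, Realises G d U ∧ U * diagonal d * Uᵀ = A := by
  obtain ⟨d, U, hU, rfl⟩ := exists_orthogonal_conj_diagonal hA.1
  exact ⟨d, U, ⟨hU, hA⟩, rfl⟩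

lemma Realises.submatrix_perm {U : Matrix V V ℝ} {σ : Equiv.Perm V}
    (h : Realises G (d ∘ σ) U) : Realises G d (U.submatrix id σ.symm) := by
  have hd : diagonal d = (diagonal (d ∘ σ)).submatrix σ.symm σ.symm := by
    rw [submatrix_diagonal_equiv, Function.comp_assoc, σ.self_comp_symm, Function.comp_id]
  constructor
  · rw [transpose_submatrix, ← submatrix_mul _ _ _ _ _ Function.bijective_id,
      h.transpose_mul_self, submatrix_one_equiv]
  · rw [transpose_submatrix, hd, submatrix_mul_equiv, submatrix_mul_equiv, submatrix_id_id]
    exact h.inS_conj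

lemma count_map_univ {ι R : Type*} [Fintype ι] [DecidableEq R] (f : ι → R) (t : R) :
    (Finset.univ.val.map f).count t = (Finset.univ.filter fun i => f i = t).card := by
  simp only [Multiset.count_map, Finset.card_def, Finset.filter_val, eq_comm]

lemma exists_perm_comp_eq {ι R : Type*} [Fintype ι] {f g : ι → R}
    (h : Finset.univ.val.map f = Finset.univ.val.map g) : ∃ σ : Equiv.Perm ι, f ∘ σ = g := by
  have := Classical.decEq R
  have hcard : ∀ t, Fintype.card {i // g i = t} = Fintype.card {i // f i = t} := fun t => by
    rw [Fintype.card_subtype, Fintype.card_subtype, ← count_map_univ, ← count_map_univ, h]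
  refine ⟨Equiv.ofFiberEquiv fun t => Fintype.equivOfCardEq (hcard t), funext fun i => ?_⟩
  exact Equiv.ofFiberEquiv_map _ i

lemma genericallyRealisable_map_univ_iff :
    GenericallyRealisable G (Finset.univ.val.map d) ↔
      ∀ Y : Finset (V → ℝ), (∀ y ∈ Y, y ≠ 0) →
        ∃ U, Realises G d U ∧ ∀ y ∈ Y, ∀ i, (U *ᵥ y) i ≠ 0 := by
  classical
  constructor
  · intro h Y hY
    obtain ⟨d', U, hd', hU, hS, hUY⟩ :=
      h (Finset.univ.biUnion fun σ : Equiv.Perm V => Y.image (· ∘ σ)) (by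
        simp only [Finset.mem_biUnion, Finset.mem_image]
        rintro _ ⟨σ, -, y, hy, rfl⟩ h0
        exact hY y hy (σ.surjective.injective_comp_right h0))
    obtain ⟨σ, rfl⟩ := exists_perm_comp_eq hd'.symm
    refine ⟨_, Realises.submatrix_perm ⟨hU, hS⟩, fun y hy i => ?_⟩
    have hmem : y ∘ σ ∈ Finset.univ.biUnion fun σ : Equiv.Perm V => Y.image (· ∘ σ) :=
      Finset.mem_biUnion.2 ⟨σ, Finset.mem_univ σ, Finset.mem_image_of_mem _ hy⟩
    exact submatrix_mulVec_equiv U y id σ.symm ▸ hUY _ hmem i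
  · intro h Y hY
    obtain ⟨U, hU, hUY⟩ := h Y hY
    exact ⟨d, U, rfl, hU.transpose_mul_self, hU.inS_conj, hUY⟩

end Realisations

section CompleteGraph

variable {V : Type*} [Fintype V]

lemma holdsGenerically_householder_mulVec_ne_zero {y : V → ℝ} (hy : y ≠ 0) (i : V) :
    HoldsGenerically fun x => (x ⬝ᵥ x) * y i - 2 * (x ⬝ᵥ y) * x i ≠ 0 := by
  classical
  obtain ⟨k, hk⟩ := Function.ne_iff.1 hy
  let P : MvPolynomial V ℝ := (∑ k, .X k * .X k) * .C (y i) - 2 * (∑ k, .X k * .C (y k)) * .X i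
  have hP : ∀ x, MvPolynomial.eval x P = (x ⬝ᵥ x) * y i - 2 * (x ⬝ᵥ y) * x i := fun x => by
    simp [P, dotProduct]
  by_cases hi : y i = 0
  · have hki : k ≠ i := fun h => hk (h ▸ hi)
    refine .of_eval_eq (x₀ := Pi.single i 1 + Pi.single k 1) P hP ?_
    simpa [hi, hki.symm] using hk
  · refine .of_eval_eq (x₀ := Pi.single i 1) P hP ?_
    simpa [two_mul] using hi

lemma holdsGenerically_add_mul_dotProduct_ne {d : V → ℝ} {a b : V} (hab : d a ≠ d b) (i j : V) :
    HoldsGenerically fun x => (d i + d j) * (x ⬝ᵥ x) - 2 * (x ⬝ᵥ (d * x)) ≠ 0 := by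
  classical
  obtain ⟨k, hk⟩ : ∃ k, d i + d j - 2 * d k ≠ 0 := by
    by_contra! h
    exact hab (by linarith [h a, h b])
  let P : MvPolynomial V ℝ :=
    .C (d i + d j) * (∑ k, .X k * .X k) - 2 * (∑ k, .X k * (.C (d k) * .X k))
  exact .of_eval_eq (x₀ := Pi.single k 1) P (fun x => by simp [P, dotProduct]) (by simpa using hk)

variable [DecidableEq V]

/-- The orthogonal reflection in the hyperplane perpendicular to `x`; it is the identity when
`x = 0`, because of the convention `2 / 0 = 0`. -/
noncomputable def householder (x : V → ℝ) : Matrix V V ℝ :=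
  1 - (2 / (x ⬝ᵥ x)) • vecMulVec x x

lemma householder_transpose (x : V → ℝ) : (householder x)ᵀ = householder x := by
  rw [householder, transpose_sub, transpose_one, transpose_smul, transpose_vecMulVec]

lemma householder_mulVec (x y : V → ℝ) :
    householder x *ᵥ y = y - (2 / (x ⬝ᵥ x) * (x ⬝ᵥ y)) • x := by
  rw [householder, sub_mulVec, one_mulVec, smul_mulVec, vecMulVec_mulVec, op_smul_eq_smul,
    smul_smul]

lemma householder_mul_self (x : V → ℝ) : householder x * householder x = 1 := by
  have hscalar : 2 / (x ⬝ᵥ x) * (2 / (x ⬝ᵥ x) * (x ⬝ᵥ x)) = 2 / (x ⬝ᵥ x) + 2 / (x ⬝ᵥ x) := by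
    rcases eq_or_ne (x ⬝ᵥ x) 0 with h | h
    · simp [h]
    · field_simp
      norm_num
  simp only [householder, sub_mul, mul_sub, one_mul, mul_one, smul_mul_smul_comm,
    vecMulVec_mul_vecMulVec, vecMulVec_smul, smul_smul, mul_assoc, hscalar, add_smul]
  abel

lemma householder_conj_diagonal_apply_of_ne (x d : V → ℝ) {i j : V} (hij : i ≠ j) :
    (householder x * diagonal d * (householder x)ᵀ) i j =
      -(2 / (x ⬝ᵥ x)) * (x i * x j) * (d i + d j - 2 / (x ⬝ᵥ x) * (x ⬝ᵥ (d * x))) := by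
  have hx : diagonal d *ᵥ x = d * x := funext fun k => mulVec_diagonal d x k
  have hx' : x ᵥ* diagonal d = d * x := funext fun k => by
    rw [vecMul_diagonal, Pi.mul_apply, mul_comm]
  rw [householder_transpose, householder]
  simp only [sub_mul, mul_sub, one_mul, mul_one, smul_mul_assoc, mul_smul_comm, vecMulVec_mul,
    mul_vecMulVec, vecMulVec_mulVec, hx, hx', op_smul_eq_smul, smul_vecMulVec, Matrix.sub_apply,
    Matrix.smul_apply, vecMulVec_apply, diagonal_apply_ne _ hij, Pi.mul_apply,
    smul_eq_mul, dotProduct_comm (d * x) x]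
  ring

lemma inS_top_householder_conj_diagonal {x d : V → ℝ} (hx : ∀ i, x i ≠ 0)
    (hd : ∀ i j, (d i + d j) * (x ⬝ᵥ x) - 2 * (x ⬝ᵥ (d * x)) ≠ 0) :
    inS ⊤ (householder x * diagonal d * (householder x)ᵀ) := by
  refine ⟨isSymm_conj_diagonal _ _, fun i j hij => ?_⟩
  have hxx : x ⬝ᵥ x ≠ 0 := fun h => hx i (congrFun (dotProduct_self_eq_zero.1 h) i)
  have hscalar : d i + d j - 2 / (x ⬝ᵥ x) * (x ⬝ᵥ (d * x)) =
      ((d i + d j) * (x ⬝ᵥ x) - 2 * (x ⬝ᵥ (d * x))) / (x ⬝ᵥ x) := by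
    field_simp
  rw [householder_conj_diagonal_apply_of_ne x d hij, hscalar]
  simp [hij, hxx, hx i, hx j, hd i j]

theorem genericallyRealisable_top {d : V → ℝ} {a b : V} (hab : d a ≠ d b) :
    GenericallyRealisable (⊤ : SimpleGraph V) (Finset.univ.val.map d) := by
  rw [genericallyRealisable_map_univ_iff]
  intro Y hY
  have hcoord : ∀ i : V, HoldsGenerically fun x : V → ℝ => x i ≠ 0 := fun i =>
    .of_eval_eq (x₀ := 1) (.X i) (fun x => by simp) (by simp)
  obtain ⟨x, hx, hxd, hxY⟩ := ((HoldsGenerically.all hcoord).and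
    ((HoldsGenerically.all fun i => .all (holdsGenerically_add_mul_dotProduct_ne hab i)).and
      (HoldsGenerically.all fun y : Y => .all
        (holdsGenerically_householder_mulVec_ne_zero (hY y y.2))))).exists_point
  refine ⟨householder x, ⟨?_, inS_top_householder_conj_diagonal hx hxd⟩, fun y hy i => ?_⟩
  · rw [householder_transpose, householder_mul_self]
  · have hxx : x ⬝ᵥ x ≠ 0 := fun h => hx i (congrFun (dotProduct_self_eq_zero.1 h) i)
    have hformula : (householder x *ᵥ y) i =
        ((x ⬝ᵥ x) * y i - 2 * (x ⬝ᵥ y) * x i) / (x ⬝ᵥ x) := by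
      rw [householder_mulVec, Pi.sub_apply, Pi.smul_apply, smul_eq_mul]
      field_simp
    rw [hformula]
    exact div_ne_zero (hxY ⟨y, hy⟩ i) hxx

theorem genericallyRealisable_of_subsingleton [Subsingleton V] (G : SimpleGraph V) (d : V → ℝ) :
    GenericallyRealisable G (Finset.univ.val.map d) := by
  rw [genericallyRealisable_map_univ_iff]
  refine fun Y hY => ⟨1, ⟨by simp, ?_, fun i j hij => (hij (Subsingleton.elim i j)).elim⟩, ?_⟩
  · exact isSymm_conj_diagonal 1 d
  · intro y hy i h
    rw [one_mulVec] at h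
    exact hY y hy (funext fun j => Subsingleton.elim i j ▸ h)

end CompleteGraph

section PathGraph

variable {m : ℕ}

/-- The `a`-th Krylov vector `D ^ a w` of the diagonal matrix `D` with diagonal `d`. -/
def krylovVector {V : Type*} (d w : V → ℝ) (a : ℕ) : V → ℝ :=
  fun s => w s * d s ^ a

/-- The square matrix whose columns are the Krylov vectors of `d` and `w`. -/
def krylovMatrix (d w : Fin m → ℝ) : Matrix (Fin m) (Fin m) ℝ :=
  of fun s a => krylovVector d w a s

lemma isUnit_det_krylovMatrix {d w : Fin m → ℝ} (hd : Function.Injective d)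
    (hw : ∀ s, w s ≠ 0) : IsUnit (krylovMatrix d w).det := by
  have hK : krylovMatrix d w = diagonal w * vandermonde d := by
    ext s a
    rw [diagonal_mul, vandermonde_apply]
    rfl
  rw [hK, det_mul, det_diagonal, isUnit_iff_ne_zero]
  exact mul_ne_zero (Finset.prod_ne_zero_iff.2 fun s _ => hw s) (det_vandermonde_ne_zero_iff.2 hd)

lemma exists_orthogonal_mul_isUpperTriangular (K : Matrix (Fin m) (Fin m) ℝ) :
    ∃ U, Uᵀ * U = 1 ∧ (U * K).IsUpperTriangular := by
  let f : Fin m → EuclideanSpace ℝ (Fin m) := fun a => WithLp.toLp 2 fun s => K s a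
  obtain ⟨b, hb⟩ : ∃ b : OrthonormalBasis (Fin m) ℝ (EuclideanSpace ℝ (Fin m)),
      ∀ i a, a < i → inner ℝ (b i) (f a) = 0 :=
    ⟨InnerProductSpace.gramSchmidtOrthonormalBasis finrank_euclideanSpace f,
      fun _ _ => InnerProductSpace.gramSchmidtOrthonormalBasis_inv_triangular _ f⟩
  refine ⟨of fun i s => b i s, mul_eq_one_comm.1 (Matrix.ext fun i j => ?_), fun i a hai => ?_⟩
  · have horth := orthonormal_iff_ite.1 b.orthonormal i j
    rw [PiLp.inner_apply] at horth
    simpa [mul_apply, one_apply, mul_comm] using horth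
  · have hzero := hb i a hai
    rw [PiLp.inner_apply] at hzero
    simpa [f, mul_apply, mul_comm] using hzero

lemma isUpperTriangular_inv {R : Matrix (Fin m) (Fin m) ℝ} (hR : R.IsUpperTriangular)
    (hdet : IsUnit R.det) : R⁻¹.IsUpperTriangular := by
  have := R.invertibleOfIsUnitDet hdet
  exact blockTriangular_inv_of_blockTriangular hR

lemma diag_ne_zero_of_isUpperTriangular {R : Matrix (Fin m) (Fin m) ℝ}
    (hR : R.IsUpperTriangular) (hdet : IsUnit R.det) (i : Fin m) : R i i ≠ 0 := by
  rw [det_of_isUpperTriangular hR, isUnit_iff_ne_zero] at hdet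
  exact Finset.prod_ne_zero_iff.1 hdet i (Finset.mem_univ i)

lemma conj_diagonal_mul_krylovMatrix_apply {d w : Fin m → ℝ} {U : Matrix (Fin m) (Fin m) ℝ}
    (hU : Uᵀ * U = 1) (i : Fin m) {b b' : Fin m} (hb : (b' : ℕ) = b + 1) :
    (U * diagonal d * Uᵀ * (U * krylovMatrix d w)) i b = (U * krylovMatrix d w) i b' := by
  have hA : U * diagonal d * Uᵀ * (U * krylovMatrix d w) = U * (diagonal d * krylovMatrix d w) := by
    rw [mul_assoc (U * diagonal d), ← mul_assoc Uᵀ, hU, one_mul, mul_assoc]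
  rw [hA, mul_apply, mul_apply]
  refine Finset.sum_congr rfl fun s _ => ?_
  simp only [diagonal_mul, krylovMatrix, krylovVector, of_apply, hb, pow_succ]
  ring

-- Below the diagonal, `A = (A * R) * R⁻¹` where `R = U * krylovMatrix d w`, and `A * R` is `R`
-- with its columns shifted by one.
lemma conj_diagonal_apply_ne_zero_iff_of_lt {d w : Fin m → ℝ} {U : Matrix (Fin m) (Fin m) ℝ}
    (hU : Uᵀ * U = 1) (hR : (U * krylovMatrix d w).IsUpperTriangular)
    (hdet : IsUnit (U * krylovMatrix d w).det) {i j : Fin m} (hji : j < i) :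
    (U * diagonal d * Uᵀ) i j ≠ 0 ↔ (j : ℕ) + 1 = i := by
  set R := U * krylovMatrix d w
  have hshift : ∀ b b' : Fin m, (b' : ℕ) = b + 1 → (U * diagonal d * Uᵀ * R) i b = R i b' :=
    fun b b' hb => conj_diagonal_mul_krylovMatrix_apply hU i hb
  have hinv := isUpperTriangular_inv hR hdet
  have hentry : (U * diagonal d * Uᵀ) i j = ∑ b, (U * diagonal d * Uᵀ * R) i b * R⁻¹ b j := by
    rw [← mul_apply, mul_assoc _ R, mul_nonsing_inv R hdet, mul_one]
  have hzero : ∀ b : Fin m, ¬((b : ℕ) + 1 = i ∧ b = j) →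
      (U * diagonal d * Uᵀ * R) i b * R⁻¹ b j = 0 := fun b hb => by
    rcases lt_or_ge j b with hjb | hbj
    · rw [hinv hjb, mul_zero]
    · have hbi : (b : ℕ) + 1 < i := by lia
      have hRi : R i ⟨b + 1, hbi.trans i.isLt⟩ = 0 := hR hbi
      rw [hshift b ⟨b + 1, hbi.trans i.isLt⟩ rfl, hRi, zero_mul]
  rw [hentry]
  refine ⟨fun h => ?_, fun hi => ?_⟩
  · by_contra hne
    exact h (Finset.sum_eq_zero fun b _ => hzero b fun hb => hne (hb.2 ▸ hb.1))
  · rw [Finset.sum_eq_single j (fun b _ hb => hzero b fun h => hb h.2)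
      fun h => (h (Finset.mem_univ j)).elim, hshift j i hi.symm]
    exact mul_ne_zero (diag_ne_zero_of_isUpperTriangular hR hdet i)
      (diag_ne_zero_of_isUpperTriangular hinv (isUnit_nonsing_inv_det R hdet) j)

lemma realises_pathGraph_of_isUpperTriangular {d w : Fin m → ℝ} {U : Matrix (Fin m) (Fin m) ℝ}
    (hU : Uᵀ * U = 1) (hR : (U * krylovMatrix d w).IsUpperTriangular)
    (hdet : IsUnit (U * krylovMatrix d w).det) : Realises (SimpleGraph.pathGraph m) d U := by
  have hsymm := isSymm_conj_diagonal U d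
  have hlt := fun i j => conj_diagonal_apply_ne_zero_iff_of_lt (i := i) (j := j) hU hR hdet
  refine ⟨hU, hsymm, fun i j hij => ?_⟩
  rw [SimpleGraph.pathGraph_adj]
  rcases hij.lt_or_gt with h | h
  · rw [← hsymm.apply, hlt j i h]
    lia
  · rw [hlt i j h]
    lia

/-- The pairings of the Krylov vectors of index less than `n`, followed by `y`, with the Krylov
vectors of index at most `n`. -/
def krylovGram {V : Type*} [Fintype V] (n : ℕ) (d y w : V → ℝ) :
    Matrix (Fin (n + 1)) (Fin (n + 1)) ℝ :=
  of fun a b =>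
    Fin.snoc (α := fun _ => V → ℝ) (fun a : Fin n => krylovVector d w a) y a ⬝ᵥ krylovVector d w b

lemma transpose_apply_eq_sum_krylovVector {d w : Fin m → ℝ} {U : Matrix (Fin m) (Fin m) ℝ}
    (hU : Uᵀ * U = 1) (hR : (U * krylovMatrix d w).IsUpperTriangular)
    (hdet : IsUnit (U * krylovMatrix d w).det) (i : Fin m) :
    U i = ∑ b : Fin (i + 1), (U * krylovMatrix d w)⁻¹ (b.castLE i.isLt) i •
      krylovVector d w b := by
  set R := U * krylovMatrix d w with hRdef
  have hinv := isUpperTriangular_inv hR hdet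
  have hU' : krylovMatrix d w * R⁻¹ = Uᵀ := by
    have hK : krylovMatrix d w = Uᵀ * R := by rw [hRdef, ← mul_assoc, hU, one_mul]
    rw [hK, mul_assoc, mul_nonsing_inv R hdet, mul_one]
  funext s
  rw [← transpose_apply U, ← hU', mul_apply, Finset.sum_apply]
  symm
  refine Fintype.sum_of_injective (Fin.castLE i.isLt) (Fin.castLE_injective _) _ _
    (fun b hb => ?_) fun b => mul_comm _ _
  have hib : i < b := by
    by_contra! h
    exact hb ⟨⟨b, Nat.lt_succ_of_le h⟩, rfl⟩
  rw [hinv hib, mul_zero]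

-- If `(U *ᵥ y) i = 0`, then row `i` of `U` is orthogonal both to `y` and to the Krylov vectors of
-- index less than `i`, while it is a combination of those of index at most `i`.
lemma mulVec_apply_ne_zero_of_det_krylovGram_ne_zero {d w y : Fin m → ℝ}
    {U : Matrix (Fin m) (Fin m) ℝ} (hU : Uᵀ * U = 1)
    (hR : (U * krylovMatrix d w).IsUpperTriangular) (hdet : IsUnit (U * krylovMatrix d w).det)
    {i : Fin m} (hi : (krylovGram i d y w).det ≠ 0) : (U *ᵥ y) i ≠ 0 := by
  have hrow := transpose_apply_eq_sum_krylovVector hU hR hdet i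
  set R := U * krylovMatrix d w
  let c : Fin (i + 1) → ℝ := fun b => R⁻¹ (b.castLE i.isLt) i
  have hgram : ∀ a, (krylovGram i d y w *ᵥ c) a =
      Fin.snoc (α := fun _ => Fin m → ℝ) (fun a : Fin i => krylovVector d w a) y a ⬝ᵥ U i :=
    fun a => calc
      _ = ∑ b, c b * (_ ⬝ᵥ krylovVector d w b) := Finset.sum_congr rfl fun b _ => mul_comm _ _
      _ = _ := by simp only [hrow, dotProduct_sum, dotProduct_smul, smul_eq_mul, c]
  intro hy
  refine hi (exists_mulVec_eq_zero_iff.1 ⟨c, fun hc => ?_, funext fun a => ?_⟩)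
  · have hdiag : R⁻¹ i i = 0 := congrFun hc (Fin.last i)
    exact diag_ne_zero_of_isUpperTriangular (isUpperTriangular_inv hR hdet)
      (isUnit_nonsing_inv_det R hdet) i hdiag
  · rw [hgram]
    cases a using Fin.lastCases with
    | last => rw [Fin.snoc_last, dotProduct_comm]; exact hy
    | cast a =>
      have hRa : R i (a.castLE i.isLt.le) = 0 := hR (Fin.lt_def.2 a.isLt)
      rw [Fin.snoc_castSucc, dotProduct_comm]
      exact hRa

-- `ω` is chosen so that the coefficient of degree `n` in the polynomial interpolating `κ z / ω` is
-- `κ` times the number of nonzero entries of `z`; it vanishes when `q` has degree less than `n`.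
open Polynomial in
lemma exists_nowhere_zero_forall_mul_eval_eq {n : ℕ} {x z : Fin (n + 1) → ℝ}
    (hx : Function.Injective x) (hz : z ≠ 0) :
    ∃ ω : Fin (n + 1) → ℝ, (∀ a, ω a ≠ 0) ∧ ∀ (q : ℝ[X]) (κ : ℝ), q.degree < n →
      (∀ a, ω a * q.eval (x a) = κ * z a) → q = 0 ∧ κ = 0 := by
  classical
  let δ : Fin (n + 1) → ℝ := fun a => ∏ b ∈ Finset.univ.erase a, (x a - x b)
  have hδ : ∀ a, δ a ≠ 0 := fun a =>
    Finset.prod_ne_zero_iff.2 fun b hb => sub_ne_zero.2 (hx.ne (Finset.ne_of_mem_erase hb).symm)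
  obtain ⟨ω, hω⟩ : ∃ ω : Fin (n + 1) → ℝ, ∀ a, ω a = if z a = 0 then 1 else z a / δ a :=
    ⟨_, fun _ => rfl⟩
  refine ⟨ω, fun a => ?_, fun q κ hq h => ?_⟩
  · rw [hω]
    split_ifs with ha
    exacts [one_ne_zero, div_ne_zero ha (hδ a)]
  have hterm : ∀ a, q.eval (x a) / δ a = if z a ≠ 0 then κ else 0 := fun a => by
    have ha := h a
    rw [hω] at ha
    by_cases hza : z a = 0
    · simpa [hza, hδ a] using ha
    · rw [if_neg hza, div_mul_eq_mul_div, div_eq_iff (hδ a)] at ha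
      rw [if_pos hza, div_eq_iff (hδ a)]
      exact mul_left_cancel₀ hza (ha.trans (by ring))
  have hdeg : q.degree < (Finset.univ (α := Fin (n + 1))).card := by
    rw [Finset.card_fin]
    exact hq.trans (Nat.cast_lt.2 n.lt_succ_self)
  have hκ : κ = 0 := by
    have hcoeff := Lagrange.coeff_eq_sum hx.injOn hdeg
    rw [Finset.card_fin, Nat.add_sub_cancel, coeff_eq_zero_of_degree_lt hq,
      Finset.sum_congr rfl fun a _ => hterm a, ← Finset.sum_filter, Finset.sum_const, eq_comm,
      smul_eq_zero, Finset.card_eq_zero, Finset.filter_eq_empty_iff] at hcoeff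
    refine hcoeff.resolve_left fun h0 => hz (funext fun a => ?_)
    simpa using h0 (Finset.mem_univ a)
  refine ⟨Polynomial.eq_zero_of_degree_lt_of_eval_index_eq_zero _ hx.injOn hdeg fun a _ => ?_, hκ⟩
  have ha := hterm a
  rwa [hκ, ite_self, div_eq_zero_iff, or_iff_left (hδ a)] at ha

lemma sum_smul_snoc_krylovVector_apply {V : Type*} {n : ℕ} (c : Fin (n + 1) → ℝ)
    (d y w : V → ℝ) (s : V) :
    (∑ a, c a • Fin.snoc (α := fun _ => V → ℝ) (fun a : Fin n => krylovVector d w a) y a) s =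
      w s * (∑ a : Fin n, .C (c a.castSucc) * .X ^ (a : ℕ) : Polynomial ℝ).eval (d s) +
        c (Fin.last n) * y s := by
  rw [Fin.sum_univ_castSucc]
  simp [Polynomial.eval_finsetSum, krylovVector, Finset.mul_sum, mul_left_comm]

lemma exists_det_krylovGram_ne_zero {V : Type*} [Fintype V] {n : ℕ} {d y : V → ℝ}
    {τ : Fin (n + 1) → V} (hτ : Function.Injective τ) (hd : Function.Injective d)
    (hy : y ∘ τ ≠ 0) : ∃ w, (krylovGram n d y w).det ≠ 0 := by
  obtain ⟨ω, hω, hpoly⟩ := exists_nowhere_zero_forall_mul_eval_eq (hd.comp hτ) hy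
  refine ⟨Function.extend τ ω 0, fun hdet => ?_⟩
  obtain ⟨c, hc, hcw⟩ := exists_vecMul_eq_zero_iff.2 hdet
  set w := Function.extend τ ω 0 with hw
  have hwτ : ∀ a, w (τ a) = ω a := fun a => hτ.extend_apply ω 0 a
  set x := ∑ a, c a • Fin.snoc (α := fun _ => V → ℝ) (fun a : Fin n => krylovVector d w a) y a
    with hx
  have hpair : ∀ b : Fin (n + 1), ∑ a, x (τ a) * ω a * d (τ a) ^ (b : ℕ) = 0 := fun b => calc
    _ = x ⬝ᵥ krylovVector d w b := by
      refine Fintype.sum_of_injective τ hτ _ _ (fun s hs => ?_) fun a => ?_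
      · rw [krylovVector, hw, Function.extend_apply' _ _ _ hs, Pi.zero_apply, zero_mul, mul_zero]
      · rw [krylovVector, hwτ, mul_assoc]
    _ = (c ᵥ* krylovGram n d y w) b := by
      rw [hx, sum_dotProduct]
      simp only [smul_dotProduct, smul_eq_mul]
      rfl
    _ = 0 := congrFun hcw b
  have hzero := eq_zero_of_forall_pow_sum_mul_pow_eq_zero (hd.comp hτ) hpair
  obtain ⟨hq, hlast⟩ := hpoly _ (-c (Fin.last n))
    (Polynomial.degree_sum_fin_lt fun a => c a.castSucc) fun a => by
      have hxa : x (τ a) = 0 := (mul_eq_zero.1 (congrFun hzero a)).resolve_right (hω a)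
      rw [hx, sum_smul_snoc_krylovVector_apply, hwτ] at hxa
      rw [Function.comp_apply, Function.comp_apply]
      linarith
  refine hc (funext fun a => ?_)
  cases a using Fin.lastCases with
  | last => exact neg_eq_zero.1 hlast
  | cast a =>
    simpa [Polynomial.finsetSum_coeff, Polynomial.coeff_X_pow, Fin.val_inj]
      using congrArg (Polynomial.coeff · a) hq

lemma holdsGenerically_det_krylovGram_ne_zero {d y : Fin m → ℝ} (hd : Function.Injective d)
    (hy : y ≠ 0) (i : Fin m) : HoldsGenerically fun w => (krylovGram i d y w).det ≠ 0 := by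
  obtain ⟨s, hs⟩ := Function.ne_iff.1 hy
  let τ : Fin (i + 1) → Fin m := Equiv.swap (Fin.castLE i.isLt 0) s ∘ Fin.castLE i.isLt
  have hτ : Function.Injective τ := (Equiv.injective _).comp (Fin.castLE_injective _)
  have hyτ : y ∘ τ ≠ 0 := fun h => hs (by simpa [τ] using congrFun h 0)
  obtain ⟨w₀, hw₀⟩ := exists_det_krylovGram_ne_zero hτ hd hyτ
  let krylovPoly (a : ℕ) (s : Fin m) : MvPolynomial (Fin m) ℝ := .X s * .C (d s ^ a)
  let P : Matrix (Fin (i + 1)) (Fin (i + 1)) (MvPolynomial (Fin m) ℝ) := of fun a b =>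
    Fin.snoc (α := fun _ => Fin m → MvPolynomial (Fin m) ℝ) (fun a : Fin i => krylovPoly a)
      (fun s => .C (y s)) a ⬝ᵥ krylovPoly b
  refine .of_eval_eq P.det (fun w => ?_) hw₀
  rw [RingHom.map_det]
  congr 1
  ext a b
  cases a using Fin.lastCases <;>
    simp [P, krylovPoly, krylovGram, krylovVector, dotProduct]

theorem genericallyRealisable_pathGraph {d : Fin m → ℝ} (hd : Function.Injective d) :
    GenericallyRealisable (SimpleGraph.pathGraph m) (Finset.univ.val.map d) := by
  rw [genericallyRealisable_map_univ_iff]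
  intro Y hY
  have hcoord : ∀ s : Fin m, HoldsGenerically fun w : Fin m → ℝ => w s ≠ 0 := fun s =>
    .of_eval_eq (x₀ := 1) (.X s) (fun w => by simp) (by simp)
  obtain ⟨w, hw, hwY⟩ := ((HoldsGenerically.all hcoord).and (HoldsGenerically.all fun y : Y =>
    .all (holdsGenerically_det_krylovGram_ne_zero hd (hY y y.2)))).exists_point
  obtain ⟨U, hU, hR⟩ := exists_orthogonal_mul_isUpperTriangular (krylovMatrix d w)
  have hdet : IsUnit (U * krylovMatrix d w).det := by
    rw [det_mul]
    exact (isUnit_det_of_left_inverse hU).mul (isUnit_det_krylovMatrix hd hw)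
  exact ⟨U, realises_pathGraph_of_isUpperTriangular hU hR hdet, fun y hy i =>
    mulVec_apply_ne_zero_of_det_krylovGram_ne_zero hU hR hdet (hwY ⟨y, hy⟩ i)⟩

lemma eq_zero_of_inS_pathGraph_of_mulVec_eq_smul [NeZero m] {A : Matrix (Fin m) (Fin m) ℝ}
    (hA : inS (SimpleGraph.pathGraph m) A) {z : Fin m → ℝ} {t : ℝ} (hz : A *ᵥ z = t • z)
    (h0 : z 0 = 0) : z = 0 := by
  suffices h : ∀ n, ∀ i : Fin m, (i : ℕ) = n → z i = 0 from funext fun i => h i i rfl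
  intro n
  induction n using Nat.strong_induction_on with
  | _ n ih =>
    intro i hi
    rcases n with _ | n
    · rwa [show i = 0 from Fin.ext hi]
    let j : Fin m := ⟨n, by lia⟩
    have hji : j ≠ i := fun h => by
      have := congrArg Fin.val h
      lia
    have hoff : ∀ b, b ≠ i → A j b * z b = 0 := fun b hbi => by
      have hbi' : (b : ℕ) ≠ i := Fin.val_ne_of_ne hbi
      rcases lt_or_ge (b : ℕ) (n + 1) with hb | hb
      · rw [ih b hb b rfl, mul_zero]
      · have hjb : j ≠ b := Fin.ne_of_lt (Fin.lt_def.2 hb)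
        have hAjb : A j b = 0 := by
          by_contra hne
          have hadj := (hA.2 j b hjb).1 hne
          rw [SimpleGraph.pathGraph_adj] at hadj
          lia
        rw [hAjb, zero_mul]
    have hrow : A j i * z i = 0 := calc
      A j i * z i = (A *ᵥ z) j := (Fintype.sum_eq_single i hoff).symm
      _ = 0 := by rw [hz, Pi.smul_apply, ih n n.lt_succ_self j rfl, smul_zero]
    refine (mul_eq_zero.1 hrow).resolve_left ((hA.2 j i hji).2 ?_)
    exact SimpleGraph.pathGraph_adj.2 (Or.inl hi.symm)

lemma conj_diagonal_mulVec_col {V : Type*} [Fintype V] [DecidableEq V] {U : Matrix V V ℝ}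
    (hU : Uᵀ * U = 1) (d : V → ℝ) (x : V) :
    (U * diagonal d * Uᵀ) *ᵥ U.col x = d x • U.col x := by
  rw [← mulVec_single_one, mulVec_mulVec, mul_assoc, hU, mul_one, ← mulVec_mulVec,
    diagonal_mulVec_single, mul_one, ← mulVec_smul, ← Pi.single_smul, smul_eq_mul, mul_one]

theorem Realises.injective_of_pathGraph {d : Fin m → ℝ} {U : Matrix (Fin m) (Fin m) ℝ}
    (h : Realises (SimpleGraph.pathGraph m) d U) : Function.Injective d := by
  intro x y hxy
  by_contra hne
  have : NeZero m := ⟨x.pos.ne'⟩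
  have hdot : ∀ x y, U.col x ⬝ᵥ U.col y = (1 : Matrix (Fin m) (Fin m) ℝ) x y := fun x y => by
    rw [← h.transpose_mul_self]
    rfl
  have hself : U.col y ⬝ᵥ U.col y = 1 := (hdot y y).trans (one_apply_eq y)
  have hcomb : U 0 y • U.col x - U 0 x • U.col y = 0 := by
    refine eq_zero_of_inS_pathGraph_of_mulVec_eq_smul h.inS_conj (t := d x) ?_ ?_
    · rw [mulVec_sub, mulVec_smul, mulVec_smul, conj_diagonal_mulVec_col h.transpose_mul_self,
        conj_diagonal_mulVec_col h.transpose_mul_self, ← hxy, smul_sub, smul_comm (d x),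
        smul_comm (d x)]
    · simp [mul_comm]
  have hUx : U 0 x = 0 := by
    have hpair : U.col y ⬝ᵥ (U 0 y • U.col x - U 0 x • U.col y) = -U 0 x := by
      rw [dotProduct_sub, dotProduct_smul, dotProduct_smul, hdot y x, hself,
        one_apply_ne (Ne.symm hne), smul_zero, smul_eq_mul, mul_one, zero_sub]
    rw [hcomb, dotProduct_zero] at hpair
    exact neg_eq_zero.1 hpair.symm
  have hcol : U.col x = 0 := eq_zero_of_inS_pathGraph_of_mulVec_eq_smul h.inS_conj
    (conj_diagonal_mulVec_col h.transpose_mul_self d x) hUx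
  have hselfx := hdot x x
  rw [hcol, dotProduct_zero, one_apply_eq] at hselfx
  exact zero_ne_one hselfx

end PathGraph

section MultiplicityLists

lemma map_univ_comp_eq_bind_replicate {α ι R : Type*} [Fintype α] [Fintype ι] [DecidableEq ι]
    (f : ι → R) (c : α → ι) :
    Finset.univ.val.map (f ∘ c) = (Finset.univ.val : Multiset ι).bind fun j =>
      Multiset.replicate (Finset.univ.filter fun x => c x = j).card (f j) := by
  calc Finset.univ.val.map (f ∘ c) = ∑ x, {f (c x)} := by
        rw [← Multiset.sum_map_singleton (Finset.univ.val.map (f ∘ c)), Multiset.map_map]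
        rfl
    _ = ∑ j, ∑ x with c x = j, {f (c x)} := (Finset.sum_fiberwise _ c _).symm
    _ = ∑ j, Multiset.replicate (Finset.univ.filter fun x => c x = j).card (f j) := by
      refine Finset.sum_congr rfl fun j _ => ?_
      rw [Finset.sum_congr rfl fun x hx => by rw [(Finset.mem_filter.1 hx).2],
        Finset.sum_const, Multiset.nsmul_singleton]

lemma count_bind_replicate {ι R : Type*} [Fintype ι] [DecidableEq R] {f : ι → R}
    (hf : Function.Injective f) (n : ι → ℕ) (j : ι) :
    ((Finset.univ.val : Multiset ι).bind fun i => Multiset.replicate (n i) (f i)).count (f j) =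
      n j := by
  rw [Multiset.count_bind]
  refine (Finset.sum_eq_single (s := Finset.univ) j (fun i _ hi => ?_) (by simp)).trans
    (Multiset.count_replicate_self _ _)
  exact (Multiset.count_replicate _ _ _).trans (if_neg (hf.ne hi))

variable {α : Type*} [Fintype α] [DecidableEq α] {G : SimpleGraph α} {r : ℕ}

lemma isOrderedMultiplicityList_iff {col : Fin r → ℕ} :
    IsOrderedMultiplicityList G col ↔
      ∃ lam : Fin r → ℝ, StrictMono lam ∧ ∃ c : α → Fin r,
        (∀ j, (Finset.univ.filter fun x => c x = j).card = col j) ∧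
        ∃ U, Realises G (lam ∘ c) U := by
  constructor
  · rintro ⟨lam, hlam, A, hA, hspec⟩
    obtain ⟨d, U, hU, rfl⟩ := hA.exists_realises
    rw [specMultiset_conj_diagonal hU.transpose_mul_self] at hspec
    have hd : ∀ x, ∃ j, lam j = d x := fun x => by
      have hx := Multiset.mem_map_of_mem d (Finset.mem_univ_val x)
      obtain ⟨j, -, hj⟩ := Multiset.mem_bind.1 (hspec ▸ hx)
      exact ⟨j, (Multiset.eq_of_mem_replicate hj).symm⟩
    choose c hc using hd
    obtain rfl : lam ∘ c = d := funext hc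
    refine ⟨lam, hlam, c, fun j => ?_, U, hU⟩
    rw [map_univ_comp_eq_bind_replicate] at hspec
    simpa only [count_bind_replicate hlam.injective] using congrArg (Multiset.count (lam j)) hspec
  · rintro ⟨lam, hlam, c, hc, U, hU⟩
    refine ⟨lam, hlam, _, hU.inS_conj, ?_⟩
    simp only [specMultiset_conj_diagonal hU.transpose_mul_self, map_univ_comp_eq_bind_replicate,
      hc]

/-- Every ordered multiplicity list of `G` is generically realised by every increasing sequence
of eigenvalues. -/
def HasGenericMultiplicityLists (G : SimpleGraph α) : Prop :=
  ∀ ⦃r : ℕ⦄ ⦃col : Fin r → ℕ⦄, IsOrderedMultiplicityList G col →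
    ∀ ⦃lam : Fin r → ℝ⦄, StrictMono lam →
      GenericallyRealisable G ((Finset.univ.val : Multiset (Fin r)).bind fun j =>
        Multiset.replicate (col j) (lam j))

lemma hasGenericMultiplicityLists_of_realises
    (h : ∀ ⦃r : ℕ⦄ ⦃c : α → Fin r⦄ ⦃lam : Fin r → ℝ⦄ ⦃U⦄, StrictMono lam →
      Realises G (lam ∘ c) U → ∀ ⦃mu : Fin r → ℝ⦄, StrictMono mu →
        GenericallyRealisable G (Finset.univ.val.map (mu ∘ c))) :
    HasGenericMultiplicityLists G := by
  intro r col hcol mu hmu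
  obtain ⟨lam, hlam, c, hc, U, hU⟩ := isOrderedMultiplicityList_iff.1 hcol
  simpa only [map_univ_comp_eq_bind_replicate, hc] using h hlam hU hmu

lemma hasGenericMultiplicityLists_pathGraph (m : ℕ) :
    HasGenericMultiplicityLists (SimpleGraph.pathGraph m) :=
  hasGenericMultiplicityLists_of_realises fun _ _ _ _ _ hU _ hmu =>
    genericallyRealisable_pathGraph (hmu.injective.comp hU.injective_of_pathGraph.of_comp)

lemma hasGenericMultiplicityLists_top : HasGenericMultiplicityLists (⊤ : SimpleGraph α) := by
  rcases subsingleton_or_nontrivial α with hα | hα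
  · exact hasGenericMultiplicityLists_of_realises fun _ _ _ _ _ _ _ _ =>
      genericallyRealisable_of_subsingleton _ _
  refine hasGenericMultiplicityLists_of_realises fun r c lam U _ hU mu hmu => ?_
  obtain ⟨i, j, hij⟩ := exists_pair_ne α
  obtain ⟨a, b, hab⟩ := exists_ne_of_conj_diagonal_apply_ne_zero hU.transpose_mul_self hij
    ((hU.inS_conj.2 i j hij).2 hij)
  exact genericallyRealisable_top (d := mu ∘ c) (hmu.injective.ne fun h => hab (congrArg lam h))

lemma hasGenericMultiplicityLists_of_eq_pathGraph_or_eq_top {m : ℕ} {G : SimpleGraph (Fin m)}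
    (h : G = SimpleGraph.pathGraph m ∨ G = ⊤) : HasGenericMultiplicityLists G := by
  rcases h with rfl | rfl
  exacts [hasGenericMultiplicityLists_pathGraph m, hasGenericMultiplicityLists_top]

end MultiplicityLists

section CouplingMatrices

variable {α β γ : Type*}

/-- The symmetric matrix with diagonal blocks `diagonal f` and `-diagonal g` and off-diagonal
block `M`. -/
def bordered [DecidableEq α] [DecidableEq β] (f : α → ℝ) (M : Matrix α β ℝ) (g : β → ℝ) :
    Matrix (α ⊕ β) (α ⊕ β) ℝ :=
  fromBlocks (diagonal f) M Mᵀ (-diagonal g)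

lemma bordered_mul_self_eq_one_iff [Fintype α] [DecidableEq α] [Fintype β] [DecidableEq β]
    {f : α → ℝ} {M : Matrix α β ℝ} {g : β → ℝ} :
    bordered f M g * bordered f M g = 1 ↔
      M * Mᵀ = diagonal (fun x => 1 - f x ^ 2) ∧ Mᵀ * M = diagonal (fun y => 1 - g y ^ 2) ∧
        diagonal f * M = M * diagonal g := by
  have hf : diagonal f * diagonal f + M * Mᵀ = 1 ↔ M * Mᵀ = diagonal fun x => 1 - f x ^ 2 := by
    rw [← eq_sub_iff_add_eq', ← diagonal_one, diagonal_mul_diagonal, diagonal_sub]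
    simp only [sq]
  have hg : Mᵀ * M + diagonal g * diagonal g = 1 ↔ Mᵀ * M = diagonal fun y => 1 - g y ^ 2 := by
    rw [← eq_sub_iff_add_eq, ← diagonal_one, diagonal_mul_diagonal, diagonal_sub]
    simp only [sq]
  have hfg : diagonal f * M + M * -diagonal g = 0 ↔ diagonal f * M = M * diagonal g := by
    rw [Matrix.mul_neg, ← sub_eq_add_neg, sub_eq_zero]
  have hgf : Mᵀ * diagonal f + -diagonal g * Mᵀ = 0 ↔ diagonal f * M = M * diagonal g := by
    rw [← hfg, ← transpose_inj]
    simp only [transpose_add, transpose_mul, transpose_transpose, diagonal_transpose,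
      transpose_neg, transpose_zero]
  rw [bordered, fromBlocks_multiply, ← fromBlocks_one, fromBlocks_inj, neg_mul_neg, hf, hg, hfg,
    hgf]
  tauto

lemma exists_nowhere_zero_orthogonal [Fintype α] [DecidableEq α] [Fintype β] [DecidableEq β]
    (h : Fintype.card α = Fintype.card β) :
    ∃ R : Matrix α β ℝ, R * Rᵀ = 1 ∧ Rᵀ * R = 1 ∧ ∀ x y, R x y ≠ 0 := by
  let ea : α ≃ Fin (Fintype.card β) := Fintype.equivFinOfCardEq h
  let eb : β ≃ Fin (Fintype.card β) := Fintype.equivFin β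
  have hd : Function.Injective fun i : Fin (Fintype.card β) => (i : ℝ) := fun i j hij =>
    Fin.ext (Nat.cast_injective hij)
  obtain ⟨U, hU, hU0⟩ := genericallyRealisable_map_univ_iff.1 (genericallyRealisable_pathGraph hd)
    (Finset.univ.image fun j => Pi.single j 1) (by simp)
  refine ⟨U.submatrix ea eb, ?_, ?_, fun x y => ?_⟩
  · rw [transpose_submatrix, submatrix_mul_equiv, hU.mul_transpose_self, submatrix_one_equiv]
  · rw [transpose_submatrix, submatrix_mul_equiv, hU.transpose_mul_self, submatrix_one_equiv]
  · simpa using hU0 _ (Finset.mem_image_of_mem _ (Finset.mem_univ (eb y))) (ea x)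

section BorderedInvolutions

variable [Fintype α] [DecidableEq α] [Fintype β] [DecidableEq β] {f : α → ℝ} {M : Matrix α β ℝ}
  {g : β → ℝ}

lemma transpose_bordered_mul_self_eq_one (h : bordered f M g * bordered f M g = 1) :
    bordered g Mᵀ f * bordered g Mᵀ f = 1 := by
  obtain ⟨h₁, h₂, h₃⟩ := bordered_mul_self_eq_one_iff.1 h
  refine bordered_mul_self_eq_one_iff.2 ⟨h₂, h₁, ?_⟩
  simpa only [transpose_mul, diagonal_transpose] using (congrArg transpose h₃).symm

lemma sum_sq_eq_of_bordered (h : bordered f M g * bordered f M g = 1) (x : α) :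
    ∑ y, M x y ^ 2 = 1 - f x ^ 2 := by
  have hx := congrFun (congrFun (bordered_mul_self_eq_one_iff.1 h).1 x) x
  simpa only [Matrix.mul_apply, transpose_apply, ← sq, diagonal_apply_eq] using hx

lemma abs_le_one_of_bordered (h : bordered f M g * bordered f M g = 1) (x : α) :
    |f x| ≤ 1 := by
  have hsum : 0 ≤ ∑ y, M x y ^ 2 := Finset.sum_nonneg fun _ _ => sq_nonneg _
  rw [sum_sq_eq_of_bordered h] at hsum
  exact (sq_le_one_iff_abs_le_one _).1 (sub_nonneg.1 hsum)

lemma eq_of_bordered (h : bordered f M g * bordered f M g = 1) {x : α} {y : β}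
    (hxy : M x y ≠ 0) : f x = g y := by
  have h₃ := congrFun (congrFun (bordered_mul_self_eq_one_iff.1 h).2.2 x) y
  rw [diagonal_mul, mul_diagonal, mul_comm] at h₃
  exact mul_left_cancel₀ hxy h₃

lemma abs_lt_one_of_bordered (h : bordered f M g * bordered f M g = 1) {x : α} {y : β}
    (hxy : M x y ≠ 0) : |f x| < 1 := by
  have hsum : 0 < ∑ y, M x y ^ 2 :=
    Finset.sum_pos' (fun _ _ => sq_nonneg _) ⟨y, Finset.mem_univ y, by positivity⟩
  rw [sum_sq_eq_of_bordered h] at hsum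
  exact (sq_lt_one_iff_abs_lt_one _).1 (sub_pos.1 hsum)

-- Both sides compute the trace of `φ(f) M Mᵀ = M φ(g) Mᵀ`.
lemma sum_mul_one_sub_sq_eq_of_bordered (h : bordered f M g * bordered f M g = 1)
    (φ : ℝ → ℝ) :
    ∑ x, φ (f x) * (1 - f x ^ 2) = ∑ y, φ (g y) * (1 - g y ^ 2) := by
  obtain ⟨h₁, h₂, -⟩ := bordered_mul_self_eq_one_iff.1 h
  have hφ : diagonal (φ ∘ f) * M = M * diagonal (φ ∘ g) := by
    ext x y
    rw [diagonal_mul, mul_diagonal, mul_comm]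
    by_cases hxy : M x y = 0
    · rw [hxy, zero_mul, zero_mul]
    · rw [Function.comp_apply, Function.comp_apply, eq_of_bordered h hxy]
  calc ∑ x, φ (f x) * (1 - f x ^ 2) = (diagonal (φ ∘ f) * (M * Mᵀ)).trace := by
        rw [h₁, diagonal_mul_diagonal, trace_diagonal]
        rfl
    _ = (M * (diagonal (φ ∘ g) * Mᵀ)).trace := by
        rw [← Matrix.mul_assoc, hφ, Matrix.mul_assoc]
    _ = (diagonal (φ ∘ g) * (Mᵀ * M)).trace := by
        rw [trace_mul_comm, Matrix.mul_assoc]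
    _ = ∑ y, φ (g y) * (1 - g y ^ 2) := by
        rw [h₂, diagonal_mul_diagonal, trace_diagonal]
        rfl

lemma card_fiber_eq_of_bordered (h : bordered f M g * bordered f M g = 1) {t : ℝ}
    (ht : |t| < 1) :
    (Finset.univ.filter fun x => f x = t).card = (Finset.univ.filter fun y => g y = t).card := by
  have hpos : 1 - t ^ 2 ≠ 0 := (sub_pos.2 ((sq_lt_one_iff_abs_lt_one t).2 ht)).ne'
  have hφ : ∀ s : ℝ, (if s = t then (1 - t ^ 2)⁻¹ else 0) * (1 - s ^ 2) = if s = t then 1 else 0 :=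
    fun s => by
      split_ifs with hs
      · rw [hs, inv_mul_cancel₀ hpos]
      · rw [zero_mul]
  have hsum := sum_mul_one_sub_sq_eq_of_bordered h fun s => if s = t then (1 - t ^ 2)⁻¹ else 0
  simp only [hφ, Finset.sum_boole, Nat.cast_inj] at hsum
  exact hsum

end BorderedInvolutions

variable {c : α → γ} {e : β → γ} [DecidableEq γ]

/-- The matrix which vanishes unless the labels `c x` and `e y` agree, and whose restriction to
the rows and columns labelled `j` is `R j`. -/
def fiberMatrix (R : ∀ j, Matrix {x // c x = j} {y // e y = j} ℝ) : Matrix α β ℝ :=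
  (blockDiagonal' R).submatrix (Equiv.sigmaFiberEquiv c).symm (Equiv.sigmaFiberEquiv e).symm

lemma fiberMatrix_apply_of_eq (R : ∀ j, Matrix {x // c x = j} {y // e y = j} ℝ) {x : α} {y : β}
    (h : c x = e y) : fiberMatrix R x y = R (e y) ⟨x, h⟩ ⟨y, rfl⟩ := by
  have hx : (Equiv.sigmaFiberEquiv c).symm x = ⟨e y, x, h⟩ := Sigma.subtype_ext h rfl
  rw [fiberMatrix, submatrix_apply, hx]
  exact blockDiagonal'_apply_eq R (e y) _ _

lemma fiberMatrix_apply_of_ne (R : ∀ j, Matrix {x // c x = j} {y // e y = j} ℝ) {x : α} {y : β}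
    (h : c x ≠ e y) : fiberMatrix R x y = 0 :=
  blockDiagonal'_apply_ne R _ _ h

lemma transpose_fiberMatrix (R : ∀ j, Matrix {x // c x = j} {y // e y = j} ℝ) :
    (fiberMatrix R)ᵀ = fiberMatrix fun j => (R j)ᵀ := by
  rw [fiberMatrix, transpose_submatrix, blockDiagonal'_transpose, fiberMatrix]

lemma fiberMatrix_mul_transpose_self [Finite γ] [Fintype β] [DecidableEq α] {a : γ → ℝ}
    {R : ∀ j, Matrix {x // c x = j} {y // e y = j} ℝ} (h : ∀ j, R j * (R j)ᵀ = a j • 1) :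
    fiberMatrix R * (fiberMatrix R)ᵀ = diagonal fun x => a (c x) := by
  have := Fintype.ofFinite γ
  have hblock : blockDiagonal' (fun j => a j • (1 : Matrix {x // c x = j} {x // c x = j} ℝ)) =
      diagonal fun x => a x.1 := by
    simp only [smul_one_eq_diagonal, blockDiagonal'_diagonal]
  rw [fiberMatrix, transpose_submatrix, submatrix_mul_equiv, blockDiagonal'_transpose,
    ← blockDiagonal'_mul, funext h, hblock, submatrix_diagonal_equiv]
  rfl

variable [Fintype α] [DecidableEq α] [Fintype β] [DecidableEq β]

lemma exists_coupling_block {t : ℝ} (ht : |t| ≤ 1)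
    (h : |t| < 1 → Fintype.card α = Fintype.card β) :
    ∃ R : Matrix α β ℝ, R * Rᵀ = (1 - t ^ 2) • (1 : Matrix α α ℝ) ∧
      Rᵀ * R = (1 - t ^ 2) • (1 : Matrix β β ℝ) ∧ (|t| < 1 → ∀ x y, R x y ≠ 0) := by
  rcases ht.lt_or_eq with ht | ht
  · obtain ⟨R, h1, h2, h3⟩ := exists_nowhere_zero_orthogonal (h ht)
    have hpos : 0 < 1 - t ^ 2 := sub_pos.2 ((sq_lt_one_iff_abs_lt_one t).2 ht)
    have hsqrt := Real.mul_self_sqrt hpos.le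
    refine ⟨√(1 - t ^ 2) • R, ?_, ?_, fun _ x y => ?_⟩
    · rw [transpose_smul, Matrix.smul_mul, Matrix.mul_smul, smul_smul, hsqrt, h1]
    · rw [transpose_smul, Matrix.smul_mul, Matrix.mul_smul, smul_smul, hsqrt, h2]
    · exact mul_ne_zero (Real.sqrt_ne_zero'.2 hpos) (h3 x y)
  · have h0 : 1 - t ^ 2 = 0 := by rw [← sq_abs, ht, one_pow, sub_self]
    exact ⟨0, by rw [Matrix.zero_mul, h0, zero_smul], by rw [Matrix.mul_zero, h0, zero_smul],
      fun hlt => absurd ht hlt.ne⟩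

lemma exists_coupling [Finite γ] {lam : γ → ℝ} (hlam : ∀ j, |lam j| ≤ 1)
    (hcard : ∀ j, |lam j| < 1 → (Finset.univ.filter fun x => c x = j).card =
      (Finset.univ.filter fun y => e y = j).card) :
    ∃ M : Matrix α β ℝ, bordered (lam ∘ c) M (lam ∘ e) * bordered (lam ∘ c) M (lam ∘ e) = 1 ∧
      ∀ x y, c x = e y → |lam (c x)| < 1 → M x y ≠ 0 := by
  choose R hR hR' hR0 using fun j =>
    exists_coupling_block (α := {x // c x = j}) (β := {y // e y = j}) (hlam j) fun hj => by
      rw [Fintype.card_subtype, Fintype.card_subtype, hcard j hj]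
  refine ⟨fiberMatrix R, bordered_mul_self_eq_one_iff.2
    ⟨fiberMatrix_mul_transpose_self hR, ?_, ?_⟩, fun x y hxy hx => ?_⟩
  · have hT := fiberMatrix_mul_transpose_self (R := fun j => (R j)ᵀ) hR'
    rwa [← transpose_fiberMatrix, transpose_transpose] at hT
  · ext x y
    rw [diagonal_mul, mul_diagonal, mul_comm]
    by_cases h : c x = e y
    · rw [Function.comp_apply, Function.comp_apply, h]
    · rw [fiberMatrix_apply_of_ne R h, zero_mul, zero_mul]
  · rw [fiberMatrix_apply_of_eq R hxy]
    exact hR0 (e y) (hxy ▸ hx) _ _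

end CouplingMatrices

section Join

variable {α β : Type*} {G : SimpleGraph α} {H : SimpleGraph β}

lemma graphJoin_adj_inl_inl {a a' : α} :
    (graphJoin G H).Adj (Sum.inl a) (Sum.inl a') ↔ G.Adj a a' := by
  simp [graphJoin, partialJoin]

lemma graphJoin_adj_inr_inr {b b' : β} :
    (graphJoin G H).Adj (Sum.inr b) (Sum.inr b') ↔ H.Adj b b' := by
  simp [graphJoin, partialJoin]

lemma graphJoin_adj_inl_inr (a : α) (b : β) : (graphJoin G H).Adj (Sum.inl a) (Sum.inr b) := by
  simp [graphJoin, partialJoin]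

lemma inS.neg {A : Matrix α α ℝ} (hA : inS G A) : inS G (-A) :=
  ⟨hA.1.neg, fun i j hij => by rw [neg_apply, neg_ne_zero, hA.2 i j hij]⟩

lemma inS_graphJoin_iff {A : Matrix (α ⊕ β) (α ⊕ β) ℝ} :
    inS (graphJoin G H) A ↔ ∃ B C D, inS G B ∧ inS H D ∧ (∀ x y, C x y ≠ 0) ∧
      fromBlocks B C Cᵀ (-D) = A := by
  constructor
  · intro hA
    have hC : A.toBlocks₂₁ = A.toBlocks₁₂ᵀ := ext fun y x => hA.1.apply _ _
    have hB : inS G A.toBlocks₁₁ :=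
      ⟨ext fun _ _ => hA.1.apply _ _, fun i j hij =>
        (hA.2 _ _ (Sum.inl_injective.ne hij)).trans graphJoin_adj_inl_inl⟩
    have hD : inS H A.toBlocks₂₂ :=
      ⟨ext fun _ _ => hA.1.apply _ _, fun i j hij =>
        (hA.2 _ _ (Sum.inr_injective.ne hij)).trans graphJoin_adj_inr_inr⟩
    refine ⟨A.toBlocks₁₁, A.toBlocks₁₂, -A.toBlocks₂₂, hB, hD.neg, fun x y =>
      (hA.2 _ _ Sum.inl_ne_inr).2 (graphJoin_adj_inl_inr x y), ?_⟩
    rw [← hC, neg_neg, fromBlocks_toBlocks]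
  · rintro ⟨B, C, D, hB, hD, hC, rfl⟩
    refine ⟨isSymm_fromBlocks_iff.2 ⟨hB.1, rfl, transpose_transpose C, hD.neg.1⟩, ?_⟩
    rintro (x | y) (x' | y') hne
    · exact (hB.2 x x' fun h => hne (congrArg _ h)).trans graphJoin_adj_inl_inl.symm
    · exact iff_of_true (hC x y') (graphJoin_adj_inl_inr x y')
    · exact iff_of_true (hC x' y) (graphJoin_adj_inl_inr x' y).symm
    · exact (hD.neg.2 y y' fun h => hne (congrArg _ h)).trans graphJoin_adj_inr_inr.symm

variable [Fintype α] [DecidableEq α] [Fintype β] [DecidableEq β]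

lemma qGraph_graphJoin_eq_two_iff [Nonempty α] [Nonempty β] :
    qGraph (graphJoin G H) = 2 ↔ ∃ B C D, inS G B ∧ inS H D ∧ (∀ x y, C x y ≠ 0) ∧
      fromBlocks B C Cᵀ (-D) * fromBlocks B C Cᵀ (-D) = 1 := by
  obtain ⟨a⟩ := ‹Nonempty α›
  obtain ⟨b⟩ := ‹Nonempty β›
  rw [qGraph_eq_two_iff (graphJoin_adj_inl_inr a b)]
  constructor
  · rintro ⟨A, hA, hAA⟩
    obtain ⟨B, C, D, hB, hD, hC, rfl⟩ := inS_graphJoin_iff.1 hA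
    exact ⟨B, C, D, hB, hD, hC, hAA⟩
  · rintro ⟨B, C, D, hB, hD, hC, h⟩
    exact ⟨_, inS_graphJoin_iff.2 ⟨B, C, D, hB, hD, hC, rfl⟩, h⟩

lemma fromBlocks_conj_mul_self_eq_one_iff {U : Matrix α α ℝ} {W : Matrix β β ℝ} (hU : Uᵀ * U = 1)
    (hW : Wᵀ * W = 1) {f : α → ℝ} {M : Matrix α β ℝ} {g : β → ℝ} {A : Matrix (α ⊕ β) (α ⊕ β) ℝ}
    (hA : A = fromBlocks (U * diagonal f * Uᵀ) (U * M * Wᵀ) (U * M * Wᵀ)ᵀ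
      (-(W * diagonal g * Wᵀ))) :
    A * A = 1 ↔ bordered f M g * bordered f M g = 1 := by
  have hQ : (fromBlocks U 0 0 W)ᵀ * fromBlocks U 0 0 W = 1 := by
    simp [fromBlocks_transpose, fromBlocks_multiply, hU, hW]
  have hconj : A = fromBlocks U 0 0 W * bordered f M g * (fromBlocks U 0 0 W)ᵀ := by
    simp [hA, bordered, fromBlocks_transpose, fromBlocks_multiply, Matrix.mul_assoc,
      -diagonal_neg]
  rw [hconj, orthogonal_conj_mul_self_eq_one_iff hQ]

end Join

section DisjointUnion

variable {ι : Type*} {α : ι → Type*} {G : ∀ i, SimpleGraph (α i)}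

lemma sigmaGraph_adj_mk_mk {i : ι} {x y : α i} :
    (sigmaGraph G).Adj ⟨i, x⟩ ⟨i, y⟩ ↔ (G i).Adj x y := by
  refine ⟨?_, fun h => ⟨i, x, y, h, rfl, rfl⟩⟩
  rintro ⟨_, x', y', h, ⟨⟩, ⟨⟩⟩
  exact h

lemma fst_eq_of_sigmaGraph_adj {p q : Σ i, α i} (h : (sigmaGraph G).Adj p q) : p.1 = q.1 := by
  obtain ⟨i, x, y, -, rfl, rfl⟩ := h
  rfl

lemma inS_sigmaGraph_iff [DecidableEq ι] {A : Matrix (Σ i, α i) (Σ i, α i) ℝ} :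
    inS (sigmaGraph G) A ↔ ∃ B, (∀ i, inS (G i) (B i)) ∧ blockDiagonal' B = A := by
  constructor
  · intro hA
    refine ⟨fun i => A.submatrix (Sigma.mk i) (Sigma.mk i), fun i => ⟨hA.1.submatrix _, ?_⟩, ?_⟩
    · exact fun x y hxy => (hA.2 _ _ (sigma_mk_injective.ne hxy)).trans sigmaGraph_adj_mk_mk
    · ext ⟨i, x⟩ ⟨j, y⟩
      by_cases hij : i = j
      · subst hij
        rw [blockDiagonal'_apply_eq, submatrix_apply]
      · rw [blockDiagonal'_apply_ne _ _ _ hij]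
        by_contra h
        exact hij (fst_eq_of_sigmaGraph_adj
          ((hA.2 _ _ fun h => hij (congrArg Sigma.fst h)).1 (Ne.symm h)))
  · rintro ⟨B, hB, rfl⟩
    refine ⟨?_, ?_⟩
    · rw [Matrix.IsSymm, blockDiagonal'_transpose]
      exact congrArg _ (funext fun i => (hB i).1)
    · rintro ⟨i, x⟩ ⟨j, y⟩ hxy
      by_cases hij : i = j
      · subst hij
        rw [blockDiagonal'_apply_eq, sigmaGraph_adj_mk_mk]
        exact (hB i).2 x y fun h => hxy (congrArg _ h)
      · rw [blockDiagonal'_apply_ne _ _ _ hij]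
        exact iff_of_false (fun h => h rfl) fun h => hij (fst_eq_of_sigmaGraph_adj h)

variable [Fintype ι] [DecidableEq ι] [∀ i, Fintype (α i)] {κ : Type*}

lemma blockDiagonal'_mul_apply (U : ∀ i, Matrix (α i) (α i) ℝ) (M : Matrix (Σ i, α i) κ ℝ)
    (i : ι) (x : α i) (q : κ) :
    (blockDiagonal' U * M) ⟨i, x⟩ q = (U i *ᵥ fun x' => M ⟨i, x'⟩ q) x := by
  rw [Matrix.mul_apply, Fintype.sum_sigma, Finset.sum_eq_single i]
  · simp only [blockDiagonal'_apply_eq]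
    rfl
  · exact fun j _ hj => Finset.sum_eq_zero fun y _ => by
      rw [blockDiagonal'_apply_ne _ _ _ hj.symm, zero_mul]
  · simp

lemma exists_apply_ne_zero_of_blockDiagonal'_mul {U : ∀ i, Matrix (α i) (α i) ℝ}
    {M : Matrix (Σ i, α i) κ ℝ} {i : ι} {x : α i} {q : κ}
    (h : (blockDiagonal' U * M) ⟨i, x⟩ q ≠ 0) : ∃ x', M ⟨i, x'⟩ q ≠ 0 := by
  contrapose! h
  rw [blockDiagonal'_mul_apply, funext h]
  exact congrFun (mulVec_zero _) x

variable [∀ i, DecidableEq (α i)] {f : ∀ i, α i → ℝ} {U : ∀ i, Matrix (α i) (α i) ℝ}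

lemma blockDiagonal'_conj_diagonal (U : ∀ i, Matrix (α i) (α i) ℝ) (f : ∀ i, α i → ℝ) :
    blockDiagonal' U * diagonal (fun p : Σ i, α i => f p.1 p.2) * (blockDiagonal' U)ᵀ =
      blockDiagonal' fun i => U i * diagonal (f i) * (U i)ᵀ := by
  rw [blockDiagonal'_transpose, ← blockDiagonal'_diagonal, ← blockDiagonal'_mul,
    ← blockDiagonal'_mul]

lemma Realises.sigmaGraph (h : ∀ i, Realises (G i) (f i) (U i)) :
    Realises (sigmaGraph G) (fun p => f p.1 p.2) (blockDiagonal' U) where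
  transpose_mul_self := by
    simp only [blockDiagonal'_transpose, ← blockDiagonal'_mul, (h _).transpose_mul_self]
    exact blockDiagonal'_one
  inS_conj := inS_sigmaGraph_iff.2
    ⟨_, fun i => (h i).inS_conj, (blockDiagonal'_conj_diagonal U f).symm⟩

lemma inS.exists_realises_sigmaGraph {A : Matrix (Σ i, α i) (Σ i, α i) ℝ}
    (hA : inS (sigmaGraph G) A) :
    ∃ (f : ∀ i, α i → ℝ) (U : ∀ i, Matrix (α i) (α i) ℝ), (∀ i, Realises (G i) (f i) (U i)) ∧
      blockDiagonal' U * diagonal (fun p : Σ i, α i => f p.1 p.2) * (blockDiagonal' U)ᵀ = A := by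
  obtain ⟨B, hB, rfl⟩ := inS_sigmaGraph_iff.1 hA
  choose f U hU hUB using fun i => (hB i).exists_realises
  exact ⟨f, U, hU, by rw [blockDiagonal'_conj_diagonal, funext hUB]⟩

lemma exists_realises_blockDiagonal'_mul_ne_zero [Finite κ]
    (hf : ∀ i, GenericallyRealisable (G i) (Finset.univ.val.map (f i)))
    (M : Matrix (Σ i, α i) κ ℝ) :
    ∃ U : ∀ i, Matrix (α i) (α i) ℝ, (∀ i, Realises (G i) (f i) (U i)) ∧
      ∀ i q, (∃ x, M ⟨i, x⟩ q ≠ 0) → ∀ x, (blockDiagonal' U * M) ⟨i, x⟩ q ≠ 0 := by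
  classical
  have := Fintype.ofFinite κ
  choose U hU hU0 using fun i => genericallyRealisable_map_univ_iff.1 (hf i)
    ((Finset.univ.image fun q x => M ⟨i, x⟩ q).erase 0) fun y hy => Finset.ne_of_mem_erase hy
  refine ⟨U, hU, fun i q hq x => ?_⟩
  rw [blockDiagonal'_mul_apply]
  exact hU0 i _ (Finset.mem_erase.2 ⟨Function.ne_iff.2 hq,
    Finset.mem_image_of_mem _ (Finset.mem_univ q)⟩) x

end DisjointUnion

section JoinOfDisjointUnions

variable {ι κ : Type*} [Fintype ι] [DecidableEq ι] [Fintype κ] [DecidableEq κ]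
  {α : ι → Type*} [∀ i, Fintype (α i)] {β : κ → Type*} [∀ j, Fintype (β j)]

lemma exists_apply_ne_zero_of_blockDiagonal'_mul_mul {U : ∀ i, Matrix (α i) (α i) ℝ}
    {M : Matrix (Σ i, α i) (Σ j, β j) ℝ} {W : ∀ j, Matrix (β j) (β j) ℝ} {i : ι} {x : α i} {j : κ}
    {y : β j} (h : (blockDiagonal' U * M * (blockDiagonal' W)ᵀ) ⟨i, x⟩ ⟨j, y⟩ ≠ 0) :
    ∃ x' y', M ⟨i, x'⟩ ⟨j, y'⟩ ≠ 0 := by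
  rw [← transpose_apply (M := blockDiagonal' U * M * (blockDiagonal' W)ᵀ), transpose_mul,
    transpose_transpose] at h
  obtain ⟨y', hy'⟩ := exists_apply_ne_zero_of_blockDiagonal'_mul h
  obtain ⟨x', hx'⟩ := exists_apply_ne_zero_of_blockDiagonal'_mul hy'
  exact ⟨x', y', hx'⟩

variable [∀ i, DecidableEq (α i)] [∀ j, DecidableEq (β j)]
  {G : ∀ i, SimpleGraph (α i)} {H : ∀ j, SimpleGraph (β j)}

lemma exists_realises_blockDiagonal'_mul_mul_ne_zero {f : ∀ i, α i → ℝ} {g : ∀ j, β j → ℝ}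
    (hf : ∀ i, GenericallyRealisable (G i) (Finset.univ.val.map (f i)))
    (hg : ∀ j, GenericallyRealisable (H j) (Finset.univ.val.map (g j)))
    {M : Matrix (Σ i, α i) (Σ j, β j) ℝ} (hM : ∀ i j, ∃ x y, M ⟨i, x⟩ ⟨j, y⟩ ≠ 0) :
    ∃ (U : ∀ i, Matrix (α i) (α i) ℝ) (W : ∀ j, Matrix (β j) (β j) ℝ),
      (∀ i, Realises (G i) (f i) (U i)) ∧ (∀ j, Realises (H j) (g j) (W j)) ∧
      ∀ p q, (blockDiagonal' U * M * (blockDiagonal' W)ᵀ) p q ≠ 0 := by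
  obtain ⟨U, hU, hUM⟩ := exists_realises_blockDiagonal'_mul_ne_zero hf M
  obtain ⟨W, hW, hWM⟩ := exists_realises_blockDiagonal'_mul_ne_zero hg (blockDiagonal' U * M)ᵀ
  refine ⟨U, W, hU, hW, ?_⟩
  rintro ⟨i, x⟩ ⟨j, y⟩
  obtain ⟨x', y', hx'⟩ := hM i j
  have hne := hWM j ⟨i, x⟩ ⟨y', hUM i ⟨j, y'⟩ ⟨x', hx'⟩ x⟩ y
  rwa [← transpose_apply (M := blockDiagonal' U * M * (blockDiagonal' W)ᵀ), transpose_mul,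
    transpose_transpose]

variable [Nonempty ι] [Nonempty κ] [∀ i, Nonempty (α i)] [∀ j, Nonempty (β j)]

lemma exists_bordered_of_qGraph_eq_two
    (h : qGraph (graphJoin (sigmaGraph G) (sigmaGraph H)) = 2) :
    ∃ (f : ∀ i, α i → ℝ) (g : ∀ j, β j → ℝ) (M : Matrix (Σ i, α i) (Σ j, β j) ℝ),
      (∀ i, ∃ U, Realises (G i) (f i) U) ∧ (∀ j, ∃ W, Realises (H j) (g j) W) ∧
      bordered (fun p => f p.1 p.2) M (fun q => g q.1 q.2) *
        bordered (fun p => f p.1 p.2) M (fun q => g q.1 q.2) = 1 ∧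
      ∀ i j, ∃ x y, M ⟨i, x⟩ ⟨j, y⟩ ≠ 0 := by
  have : Nonempty (Σ i, α i) := nonempty_sigma.2 ⟨Classical.arbitrary ι, inferInstance⟩
  have : Nonempty (Σ j, β j) := nonempty_sigma.2 ⟨Classical.arbitrary κ, inferInstance⟩
  obtain ⟨B, C, D, hB, hD, hC, hsq⟩ := qGraph_graphJoin_eq_two_iff.1 h
  obtain ⟨f, U, hU, rfl⟩ := hB.exists_realises_sigmaGraph
  obtain ⟨g, W, hW, rfl⟩ := hD.exists_realises_sigmaGraph
  have hU' := Realises.sigmaGraph hU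
  have hW' := Realises.sigmaGraph hW
  set M := (blockDiagonal' U)ᵀ * C * blockDiagonal' W with hM
  have hCM : blockDiagonal' U * M * (blockDiagonal' W)ᵀ = C := by
    rw [hM, ← Matrix.mul_assoc, ← Matrix.mul_assoc, hU'.mul_transpose_self, Matrix.one_mul,
      Matrix.mul_assoc, hW'.mul_transpose_self, Matrix.mul_one]
  refine ⟨f, g, M, fun i => ⟨_, hU i⟩, fun j => ⟨_, hW j⟩, ?_, fun i j => ?_⟩
  · exact (fromBlocks_conj_mul_self_eq_one_iff hU'.transpose_mul_self hW'.transpose_mul_self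
      (by rw [hCM])).1 hsq
  · have hne := hC ⟨i, Classical.arbitrary _⟩ ⟨j, Classical.arbitrary _⟩
    rw [← hCM] at hne
    exact exists_apply_ne_zero_of_blockDiagonal'_mul_mul hne

lemma qGraph_eq_two_of_bordered {f : ∀ i, α i → ℝ} {g : ∀ j, β j → ℝ}
    {M : Matrix (Σ i, α i) (Σ j, β j) ℝ}
    (hf : ∀ i, GenericallyRealisable (G i) (Finset.univ.val.map (f i)))
    (hg : ∀ j, GenericallyRealisable (H j) (Finset.univ.val.map (g j)))
    (h : bordered (fun p => f p.1 p.2) M (fun q => g q.1 q.2) *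
      bordered (fun p => f p.1 p.2) M (fun q => g q.1 q.2) = 1)
    (hM : ∀ i j, ∃ x y, M ⟨i, x⟩ ⟨j, y⟩ ≠ 0) :
    qGraph (graphJoin (sigmaGraph G) (sigmaGraph H)) = 2 := by
  have : Nonempty (Σ i, α i) := nonempty_sigma.2 ⟨Classical.arbitrary ι, inferInstance⟩
  have : Nonempty (Σ j, β j) := nonempty_sigma.2 ⟨Classical.arbitrary κ, inferInstance⟩
  obtain ⟨U, W, hU, hW, hne⟩ := exists_realises_blockDiagonal'_mul_mul_ne_zero hf hg hM
  have hU' := Realises.sigmaGraph hU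
  have hW' := Realises.sigmaGraph hW
  exact qGraph_graphJoin_eq_two_iff.2 ⟨_, _, _, hU'.inS_conj, hW'.inS_conj, hne,
    (fromBlocks_conj_mul_self_eq_one_iff hU'.transpose_mul_self hW'.transpose_mul_self rfl).2 h⟩

end JoinOfDisjointUnions

section Labellings

lemma mem_interiorRows_iff {r : ℕ} {j : Fin r} :
    j ∈ interiorRows r ↔ (∃ i, i < j) ∧ ∃ i, j < i := by
  simp only [interiorRows, Finset.mem_filter_univ]
  constructor
  · rintro ⟨h0, h1⟩
    exact ⟨⟨⟨0, by omega⟩, Fin.lt_def.2 (by simp only; omega)⟩,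
      ⟨⟨r - 1, by omega⟩, Fin.lt_def.2 (by simp only; omega)⟩⟩
  · rintro ⟨⟨i, hi⟩, ⟨i', hi'⟩⟩
    constructor <;> omega

lemma abs_lt_one_iff_mem_interiorRows {r : ℕ} {lam : Fin r → ℝ} (hmono : StrictMono lam)
    (hlam : ∀ j, |lam j| ≤ 1) (hneg : -1 ∈ Set.range lam) (hpos : 1 ∈ Set.range lam) (j : Fin r) :
    |lam j| < 1 ↔ j ∈ interiorRows r := by
  rw [mem_interiorRows_iff, abs_lt]
  constructor
  · obtain ⟨i, hi⟩ := hneg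
    obtain ⟨i', hi'⟩ := hpos
    exact fun h => ⟨⟨i, hmono.lt_iff_lt.1 (hi.trans_lt h.1)⟩,
      ⟨i', hmono.lt_iff_lt.1 (h.2.trans_eq hi'.symm)⟩⟩
  · rintro ⟨⟨i, hi⟩, ⟨i', hi'⟩⟩
    exact ⟨(abs_le.1 (hlam i)).1.trans_lt (hmono hi), (hmono hi').trans_le (abs_le.1 (hlam i')).2⟩

lemma exists_strictMono_abs_lt_one_iff_mem_interiorRows {r : ℕ} (hr : 2 ≤ r) :
    ∃ lam : Fin r → ℝ, StrictMono lam ∧ (∀ j, |lam j| ≤ 1) ∧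
      ∀ j, |lam j| < 1 ↔ j ∈ interiorRows r := by
  have hr' : (0 : ℝ) < r - 1 := sub_pos.2 (by exact_mod_cast hr)
  have hmono : StrictMono fun j : Fin r => 2 * ((j : ℝ) / (r - 1)) - 1 := fun i j hij => by
    have hij' : (i : ℝ) < j := by exact_mod_cast hij
    linarith [div_lt_div_of_pos_right hij' hr']
  have hlam : ∀ j : Fin r, |2 * ((j : ℝ) / (r - 1)) - 1| ≤ 1 := fun j => by
    have hj : (j : ℝ) ≤ r - 1 := le_sub_iff_add_le.2 (by exact_mod_cast j.2)
    have h0 : 0 ≤ (j : ℝ) / (r - 1) := by positivity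
    have h1 : (j : ℝ) / (r - 1) ≤ 1 := (div_le_one hr').2 hj
    exact abs_le.2 ⟨by linarith, by linarith⟩
  refine ⟨_, hmono, hlam, abs_lt_one_iff_mem_interiorRows hmono hlam ⟨⟨0, by omega⟩, by simp⟩
    ⟨⟨r - 1, by omega⟩, ?_⟩⟩
  simp only [Nat.cast_pred (show 0 < r by omega), div_self hr'.ne']
  norm_num

lemma exists_strictMono_range_of_abs_le_one (T : Finset ℝ) (hT : ∀ t ∈ T, |t| ≤ 1) :
    ∃ r, 3 ≤ r ∧ ∃ lam : Fin r → ℝ, StrictMono lam ∧ (∀ t ∈ T, ∃ j, lam j = t) ∧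
      ∀ j, |lam j| < 1 ↔ j ∈ interiorRows r := by
  set S : Finset ℝ := {-1, 0, 1} ∪ T with hS
  have hrange : ∀ t ∈ S, t ∈ Set.range (S.orderEmbOfFin rfl) := fun t ht => by
    rwa [Finset.range_orderEmbOfFin]
  have hcard : 3 ≤ S.card := by
    have h3 : ({-1, 0, 1} : Finset ℝ).card = 3 :=
      Finset.card_eq_three.2 ⟨-1, 0, 1, by norm_num, by norm_num, by norm_num, rfl⟩
    exact h3.symm.trans_le (Finset.card_le_card Finset.subset_union_left)
  have hle : ∀ t ∈ S, |t| ≤ 1 := fun t ht => by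
    rcases Finset.mem_union.1 ht with h | h
    · simp only [Finset.mem_insert, Finset.mem_singleton] at h
      rcases h with rfl | rfl | rfl <;> norm_num
    · exact hT t h
  refine ⟨S.card, hcard, S.orderEmbOfFin rfl, (S.orderEmbOfFin rfl).strictMono,
    fun t ht => hrange t (Finset.mem_union_right _ ht),
    abs_lt_one_iff_mem_interiorRows (S.orderEmbOfFin rfl).strictMono
      (fun j => hle _ (Finset.orderEmbOfFin_mem S rfl j)) (hrange _ ?_) (hrange _ ?_)⟩ <;>
  simp [hS]

lemma sum_card_filter_eq_card_filter_sigma {ι γ : Type*} [Fintype ι] [DecidableEq γ]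
    {α : ι → Type*} [∀ i, Fintype (α i)] (c : ∀ i, α i → γ) (j : γ) :
    ∑ i, (Finset.univ.filter fun x => c i x = j).card =
      (Finset.univ.filter fun p : Σ i, α i => c p.1 p.2 = j).card := by
  simp only [Finset.card_filter, Fintype.sum_sigma]

lemma compatible_card_iff {r k l : ℕ} {α : Fin k → Type*} [∀ i, Fintype (α i)]
    {β : Fin l → Type*} [∀ j, Fintype (β j)] {c : ∀ i, α i → Fin r} {e : ∀ i, β i → Fin r} :
    Compatible (fun j i => (Finset.univ.filter fun x => c i x = j).card)
        (fun j i => (Finset.univ.filter fun y => e i y = j).card) ↔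
      (∀ j ∈ interiorRows r, (Finset.univ.filter fun p : Σ i, α i => c p.1 p.2 = j).card =
        (Finset.univ.filter fun q : Σ i, β i => e q.1 q.2 = j).card) ∧
      ∀ a b, ∃ x y, c a x = e b y ∧ c a x ∈ interiorRows r := by
  simp only [Compatible, sum_card_filter_eq_card_filter_sigma]
  refine and_congr_right' (forall₂_congr fun a b => ?_)
  simp only [ne_eq, Finset.sum_eq_zero_iff, mul_eq_zero, Finset.card_eq_zero,
    Finset.filter_eq_empty_iff, Finset.mem_univ, true_imp_iff]
  push Not
  constructor
  · rintro ⟨j, hj, ⟨x, rfl⟩, ⟨y, hy⟩⟩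
    exact ⟨x, y, hy.symm, hj⟩
  · rintro ⟨x, y, hxy, hx⟩
    exact ⟨c a x, hx, ⟨x, rfl⟩, ⟨y, hxy.symm⟩⟩

end Labellings

section Compatibility

variable {k l : ℕ} {α : Fin k → Type*} [∀ i, Fintype (α i)] [∀ i, DecidableEq (α i)]
  [∀ i, Nonempty (α i)] {β : Fin l → Type*} [∀ j, Fintype (β j)] [∀ j, DecidableEq (β j)]
  [∀ j, Nonempty (β j)] {G : ∀ i, SimpleGraph (α i)} {H : ∀ j, SimpleGraph (β j)}

lemma exists_compatible_of_qGraph_eq_two [NeZero k] [NeZero l]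
    (h : qGraph (graphJoin (sigmaGraph G) (sigmaGraph H)) = 2) :
    ∃ r : ℕ, 3 ≤ r ∧ ∃ (V : Fin r → Fin k → ℕ) (W : Fin r → Fin l → ℕ),
      (∀ i, IsOrderedMultiplicityList (G i) fun j => V j i) ∧
      (∀ i, IsOrderedMultiplicityList (H i) fun j => W j i) ∧ Compatible V W := by
  obtain ⟨f, g, M, hf, hg, hM, hM0⟩ := exists_bordered_of_qGraph_eq_two h
  obtain ⟨r, hr, lam, hlam, hlam', hint⟩ := exists_strictMono_range_of_abs_le_one
    (Finset.univ.image (fun p : Σ i, α i => f p.1 p.2) ∪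
      Finset.univ.image fun q : Σ j, β j => g q.1 q.2) (by
      simp only [Finset.mem_union, Finset.mem_image, Finset.mem_univ, true_and]
      rintro _ (⟨p, rfl⟩ | ⟨q, rfl⟩)
      · exact abs_le_one_of_bordered hM p
      · exact abs_le_one_of_bordered (transpose_bordered_mul_self_eq_one hM) q)
  have hc : ∀ i x, ∃ j, lam j = f i x := fun i x => hlam' _ (Finset.mem_union_left _
    (Finset.mem_image.2 ⟨⟨i, x⟩, Finset.mem_univ _, rfl⟩))
  have he : ∀ i y, ∃ j, lam j = g i y := fun i y => hlam' _ (Finset.mem_union_right _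
    (Finset.mem_image.2 ⟨⟨i, y⟩, Finset.mem_univ _, rfl⟩))
  choose c hc using hc
  choose e he using he
  obtain rfl : (fun i => lam ∘ c i) = f := funext₂ hc
  obtain rfl : (fun i => lam ∘ e i) = g := funext₂ he
  refine ⟨r, hr, fun j i => (Finset.univ.filter fun x => c i x = j).card,
    fun j i => (Finset.univ.filter fun y => e i y = j).card,
    fun i => isOrderedMultiplicityList_iff.2 ⟨lam, hlam, c i, fun _ => rfl, hf i⟩,
    fun i => isOrderedMultiplicityList_iff.2 ⟨lam, hlam, e i, fun _ => rfl, hg i⟩,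
    compatible_card_iff.2 ⟨fun j hj => ?_, fun a b => ?_⟩⟩
  · simpa only [Function.comp_apply, hlam.injective.eq_iff] using
      card_fiber_eq_of_bordered hM ((hint j).2 hj)
  · obtain ⟨x, y, hxy⟩ := hM0 a b
    exact ⟨x, y, hlam.injective (eq_of_bordered hM hxy),
      (hint _).1 (abs_lt_one_of_bordered hM hxy)⟩

lemma qGraph_eq_two_of_compatible [NeZero k] [NeZero l]
    (hG : ∀ i, HasGenericMultiplicityLists (G i)) (hH : ∀ j, HasGenericMultiplicityLists (H j))
    {r : ℕ} (hr : 2 ≤ r) {V : Fin r → Fin k → ℕ} {W : Fin r → Fin l → ℕ}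
    (hV : ∀ i, IsOrderedMultiplicityList (G i) fun j => V j i)
    (hW : ∀ i, IsOrderedMultiplicityList (H i) fun j => W j i) (hVW : Compatible V W) :
    qGraph (graphJoin (sigmaGraph G) (sigmaGraph H)) = 2 := by
  obtain ⟨lam, hlam, hle, hint⟩ := exists_strictMono_abs_lt_one_iff_mem_interiorRows hr
  have hG' := fun i => hG i (hV i) hlam
  have hH' := fun i => hH i (hW i) hlam
  choose _ _ c hc _ using fun i => isOrderedMultiplicityList_iff.1 (hV i)
  choose _ _ e he _ using fun i => isOrderedMultiplicityList_iff.1 (hW i)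
  obtain rfl : (fun j i => (Finset.univ.filter fun x => c i x = j).card) = V :=
    funext₂ fun j i => hc i j
  obtain rfl : (fun j i => (Finset.univ.filter fun y => e i y = j).card) = W :=
    funext₂ fun j i => he i j
  obtain ⟨hcard, hmeet⟩ := compatible_card_iff.1 hVW
  obtain ⟨M, hM, hM0⟩ := exists_coupling (c := fun p : Σ i, α i => c p.1 p.2)
    (e := fun q : Σ i, β i => e q.1 q.2) hle fun j hj => hcard j ((hint j).1 hj)
  simp only [← map_univ_comp_eq_bind_replicate] at hG' hH'
  refine qGraph_eq_two_of_bordered hG' hH' hM fun a b => ?_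
  obtain ⟨x, y, hxy, hx⟩ := hmeet a b
  exact ⟨x, y, hM0 ⟨a, x⟩ ⟨b, y⟩ hxy ((hint _).2 hx)⟩

theorem statement6_general [NeZero k] [NeZero l]
    (hG : ∀ i, HasGenericMultiplicityLists (G i)) (hH : ∀ j, HasGenericMultiplicityLists (H j)) :
    qGraph (graphJoin (sigmaGraph G) (sigmaGraph H)) = 2 ↔
      ∃ r : ℕ, 3 ≤ r ∧ ∃ (V : Fin r → Fin k → ℕ) (W : Fin r → Fin l → ℕ),
        (∀ i, IsOrderedMultiplicityList (G i) fun j => V j i) ∧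
        (∀ i, IsOrderedMultiplicityList (H i) fun j => W j i) ∧ Compatible V W := by
  refine ⟨exists_compatible_of_qGraph_eq_two, ?_⟩
  rintro ⟨r, hr, V, W, hV, hW, hVW⟩
  exact qGraph_eq_two_of_compatible hG hH (Nat.le_of_succ_le hr) hV hW hVW

end Compatibility

/-- Corollary 3.2: if `G` and `H` are unions of paths or complete graphs,
then `q(G ∨ H) = 2` iff `G` and `H` have a pair of compatible multiplicity matrices. -/
theorem statement6 (k l : ℕ) (hk : 1 ≤ k) (hl : 1 ≤ l)
    (m : Fin k → ℕ) (p : Fin l → ℕ) (hm : ∀ i, 1 ≤ m i) (hp : ∀ j, 1 ≤ p j)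
    (G : ∀ i, SimpleGraph (Fin (m i))) (H : ∀ j, SimpleGraph (Fin (p j)))
    (hG : ∀ i, G i = SimpleGraph.pathGraph (m i) ∨ G i = ⊤)
    (hH : ∀ j, H j = SimpleGraph.pathGraph (p j) ∨ H j = ⊤) :
    qGraph (graphJoin (sigmaGraph G) (sigmaGraph H)) = 2 ↔
      ∃ r : ℕ, 3 ≤ r ∧ ∃ (V : Fin r → Fin k → ℕ) (W : Fin r → Fin l → ℕ),
        (∀ i, IsOrderedMultiplicityList (G i) (fun j => V j i)) ∧
        (∀ i, IsOrderedMultiplicityList (H i) (fun j => W j i)) ∧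
        Compatible V W := by
  have : NeZero k := .of_pos hk
  have : NeZero l := .of_pos hl
  have := fun i => Fin.pos_iff_nonempty.1 (hm i)
  have := fun j => Fin.pos_iff_nonempty.1 (hp j)
  exact statement6_general (fun i => hasGenericMultiplicityLists_of_eq_pathGraph_or_eq_top (hG i))
    fun j => hasGenericMultiplicityLists_of_eq_pathGraph_or_eq_top (hH j)
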